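/- arXiv:1211.5066 — 2 statements merged into one kernel-verified Lean document; each statement's English description precedes it below -/
import Mathlib

section
/- Let $F_1,\dots,F_N$ be $\mathbb{R}$-linearly independent functions in $L^1(X,\nu)$, let $B = \{\xi\in\mathbb{R}^N : \|\sum_n \xi_n F_n\|_1 \le 1\}$, and let $B^*$ be the dual unit ball $\{\eta : \sup_{\xi\in B}\langle\xi,\eta\rangle \le 1\}$. Then $\mathrm{Vol}_N(B^*) = \frac{2^N}{N!}\int_{X^N} |\Delta(F_1,\dots,F_N;\mathbf{x})|\,d\nu^N(\mathbf{x})$. -/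
open MeasureTheory

def zono {ι : Type*} [Fintype ι] {N : ℕ} (v : ι → Fin N → ℝ) : Set (Fin N → ℝ) :=
  (fun t : ι → ℝ => ∑ j, t j • v j) '' (Set.Icc (-1) 1)

lemma zono_compact {ι : Type*} [Fintype ι] {N : ℕ} (v : ι → Fin N → ℝ) :
    IsCompact (zono v) := by
  unfold zono
  exact isCompact_Icc.image (by fun_prop)

lemma zono_convex {ι : Type*} [Fintype ι] {N : ℕ} (v : ι → Fin N → ℝ) :
    Convex ℝ (zono v) := by
  have h : zono v = (Fintype.linearCombination ℝ v) '' (Set.Icc (-1) 1) := by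
    ext x; simp [zono, Fintype.linearCombination_apply]
  rw [h]
  exact (convex_Icc _ _).linear_image _

lemma vol_slice {n : ℕ} {K : Set (Fin (n+1) → ℝ)} (hK : MeasurableSet K) :
    volume K = ∫⁻ y : Fin n → ℝ, volume {x : ℝ | (Fin.cons x y : Fin (n+1) → ℝ) ∈ K} := by
  have hp := (volume_preserving_piFinSuccAbove (fun _ : Fin (n+1) => ℝ) 0).symm
  rw [← hp.measure_preimage hK.nullMeasurableSet, Measure.volume_eq_prod,
    Measure.prod_apply_symm ((MeasurableEquiv.measurable _) hK)]
  refine lintegral_congr fun y => ?_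
  congr 1
  ext x
  simp [MeasurableEquiv.piFinSuccAbove, Fin.insertNthEquiv]

lemma vol_interval {S : Set ℝ} (hc : IsCompact S) (hv : Convex ℝ S) (hn : S.Nonempty) :
    volume {x : ℝ | ∃ y ∈ S, ∃ s ∈ Set.Icc (-1:ℝ) 1, x = y + s} = volume S + 2 := by
  have h1 := eq_Icc_of_connected_compact ⟨hn, hv.isPreconnected⟩ hc
  obtain ⟨a, b, hab, rfl⟩ : ∃ a b : ℝ, a ≤ b ∧ S = Set.Icc a b :=
    ⟨sInf S, sSup S, by
      have := hn; rw [h1] at this; exact Set.nonempty_Icc.1 this, h1⟩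
  have h2 : {x : ℝ | ∃ y ∈ Set.Icc a b, ∃ s ∈ Set.Icc (-1:ℝ) 1, x = y + s}
      = Set.Icc (a-1) (b+1) := by
    ext x
    simp only [Set.mem_ofPred_eq, Set.mem_Icc]
    constructor
    · rintro ⟨y, hy, s, hs, rfl⟩
      constructor <;> linarith
    · rintro ⟨h, h'⟩
      refine ⟨max a (min x b), ⟨le_max_left _ _, max_le hab (min_le_right _ _)⟩,
        x - max a (min x b), ⟨?_, ?_⟩, by ring⟩ <;>
      rcases max_cases a (min x b) with hh | hh <;> rcases min_cases x b with h3 | h3 <;> linarith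
  rw [h2, Real.volume_Icc, Real.volume_Icc, show (2:ENNReal) = ENNReal.ofReal 2 by simp,
    ← ENNReal.ofReal_add (by linarith) (by norm_num)]
  congr 1; ring

lemma vol_add_seg {n : ℕ} {K : Set (Fin (n+1) → ℝ)} (hc : IsCompact K) (hv : Convex ℝ K) :
    volume {x : Fin (n+1) → ℝ | ∃ y ∈ K, ∃ s ∈ Set.Icc (-1:ℝ) 1, x = y + s • Pi.single 0 1}
      = volume K + 2 * volume ((fun x : Fin (n+1) → ℝ => Fin.tail x) '' K) := by
  have htail : Continuous (fun x : Fin (n+1) → ℝ => (Fin.tail x : Fin n → ℝ)) := by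
    unfold Fin.tail; fun_prop
  have hct : IsCompact ((fun x : Fin (n+1) → ℝ => (Fin.tail x : Fin n → ℝ)) '' K) :=
    hc.image htail
  have hcK : IsCompact {x : Fin (n+1) → ℝ | ∃ y ∈ K, ∃ s ∈ Set.Icc (-1:ℝ) 1,
      x = y + s • Pi.single 0 1} := by
    have : {x : Fin (n+1) → ℝ | ∃ y ∈ K, ∃ s ∈ Set.Icc (-1:ℝ) 1, x = y + s • Pi.single 0 1}
      = (fun p : (Fin (n+1) → ℝ) × ℝ => p.1 + p.2 • Pi.single 0 1) '' (K ×ˢ Set.Icc (-1:ℝ) 1) := by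
      ext x; constructor
      · rintro ⟨y, hy, s, hs, rfl⟩; exact ⟨(y, s), ⟨hy, hs⟩, rfl⟩
      · rintro ⟨⟨y, s⟩, ⟨hy, hs⟩, rfl⟩; exact ⟨y, hy, s, hs, rfl⟩
    rw [this]
    exact (hc.prod isCompact_Icc).image (by fun_prop)
  rw [vol_slice hcK.isClosed.measurableSet, vol_slice hc.isClosed.measurableSet,
    ← lintegral_indicator_one hct.isClosed.measurableSet, ← lintegral_const_mul' _ _ (by simp),
    ← lintegral_add_right]
  swap
  · exact ((measurable_one.indicator hct.isClosed.measurableSet).const_mul _)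
  congr 1
  ext y
  have hset : {x : ℝ | (Fin.cons x y : Fin (n+1) → ℝ) ∈ {x : Fin (n+1) → ℝ | ∃ y ∈ K,
      ∃ s ∈ Set.Icc (-1:ℝ) 1, x = y + s • Pi.single 0 1}} =
      {x : ℝ | ∃ z ∈ {x : ℝ | (Fin.cons x y : Fin (n+1) → ℝ) ∈ K}, ∃ s ∈ Set.Icc (-1:ℝ) 1,
        x = z + s} := by
    ext x
    constructor
    · rintro ⟨z, hz, s, hs, h⟩
      refine ⟨z 0, ?_, s, hs, ?_⟩
      · have : (Fin.cons (z 0) y : Fin (n+1) → ℝ) = z := by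
          ext i
          refine Fin.cases ?_ (fun j => ?_) i
          · simp
          · have := congrFun h j.succ
            simpa using this
        simpa [this] using hz
      · have := congrFun h 0
        simpa using this
    · rintro ⟨z, hz, s, hs, rfl⟩
      refine ⟨_, hz, s, hs, ?_⟩
      ext i
      refine Fin.cases ?_ (fun j => ?_) i <;> simp
  rw [hset]
  by_cases hy : y ∈ (fun x : Fin (n+1) → ℝ => (Fin.tail x : Fin n → ℝ)) '' K
  · have hy' := hy
    obtain ⟨x, hx, rfl⟩ := hy'
    rw [vol_interval]
    · simp [Set.indicator_of_mem hy]
    · have hcl : IsClosed {z : ℝ | (Fin.cons z (Fin.tail x) : Fin (n+1) → ℝ) ∈ K} :=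
        hc.isClosed.preimage (by fun_prop)
      have : IsCompact ((fun x : Fin (n+1) → ℝ => x 0) '' K) := hc.image (by fun_prop)
      refine this.of_isClosed_subset hcl ?_
      intro z hz
      exact ⟨_, hz, by simp⟩
    · intro a ha b hb s t hs ht hst
      have := hv ha hb hs ht hst
      simp only [Set.mem_ofPred_eq] at *
      convert this using 1
      ext i
      refine Fin.cases ?_ (fun j => ?_) i
      · simp
      · simp [← add_mul, hst]
    · exact ⟨x 0, by simpa using hx⟩
  · have : {x : ℝ | (Fin.cons x y : Fin (n+1) → ℝ) ∈ K} = ∅ := by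
      ext x
      simp only [Set.mem_ofPred_eq, Set.mem_empty_iff_false, iff_false]
      intro h
      exact hy ⟨_, h, by simp⟩
    simp [this, Set.indicator_of_notMem hy]

lemma sum_split {N m : ℕ} (G : (Fin (N+1) → Fin (m+1)) → ℝ)
    (hG : ∀ f i j, i ≠ j → f i = 0 → f j = 0 → G f = 0) :
    ∑ f, G f = ∑ g : Fin (N+1) → Fin m, G (fun i => (g i).succ)
      + ∑ p : Fin (N+1), ∑ g : Fin N → Fin m, G (p.insertNth 0 (fun i => (g i).succ)) := by
  rw [← Fintype.sum_prod_type', ← Fintype.sum_sumElim]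
  symm
  refine Fintype.sum_of_injective
    (Sum.elim (fun g i => (g i).succ) (fun pg => pg.1.insertNth 0 (fun i => (pg.2 i).succ))) ?_ _ _ ?_ ?_
  · have hne : ∀ (g : Fin (N+1) → Fin m) (p : Fin (N+1)) (g' : Fin N → Fin m),
        (fun i => (g i).succ) ≠ (p.insertNth 0 (fun i => (g' i).succ) : Fin (N+1) → Fin (m+1)) := by
      intro g p g' h
      have := congrFun h p
      simp at this
    rintro (g | ⟨p, g⟩) (g' | ⟨p', g'⟩) h
    · simp only [Sum.elim_inl] at h
      congr 1
      ext i
      have := congrFun h i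
      simpa [Fin.ext_iff] using this
    · exact absurd h (hne _ _ _)
    · exact absurd h.symm (hne _ _ _)
    · simp only [Sum.elim_inr] at h
      have hp : p = p' := by
        by_contra hpp
        obtain ⟨k, hk⟩ := Fin.exists_succAbove_eq hpp
        have := congrFun h p
        rw [← hk] at this
        rw [hk] at this
        rw [Fin.insertNth_apply_same, ← hk, Fin.insertNth_apply_succAbove] at this
        exact (Fin.succ_ne_zero _ this.symm)
      subst hp
      have : g = g' := by
        ext i
        have := congrFun h (p.succAbove i)
        simpa [Fin.ext_iff] using this
      rw [this]
  · intro f hf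
    by_cases h0 : ∀ i, f i ≠ 0
    · exfalso; apply hf
      refine ⟨Sum.inl (fun i => (f i).pred (h0 i)), ?_⟩
      ext i; simp
    · push Not at h0
      obtain ⟨p, hp⟩ := h0
      by_cases h1 : ∀ i, f (p.succAbove i) ≠ 0
      · exfalso; apply hf
        refine ⟨Sum.inr (p, fun i => (f (p.succAbove i)).pred (h1 i)), ?_⟩
        simp only [Sum.elim_inr, Fin.succ_pred]
        rw [← hp]
        exact Fin.insertNth_self_removeNth p f
      · push Not at h1
        obtain ⟨i, hi⟩ := h1
        exact hG f _ _ (Fin.succAbove_ne p i) hi hp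
  · rintro (g | ⟨p, g⟩) <;> rfl

lemma det_ins {N m : ℕ} (u : Fin m → Fin (N+1) → ℝ) (p : Fin (N+1)) (g : Fin N → Fin m) :
    |Matrix.det (Matrix.of fun i => (Fin.cons (Pi.single 0 1) u : Fin (m+1) → Fin (N+1) → ℝ)
      ((p.insertNth 0 (fun i => (g i).succ) : Fin (N+1) → Fin (m+1)) i))|
    = |Matrix.det (Matrix.of fun i => (Fin.tail (u (g i)) : Fin N → ℝ))| := by
  rw [Matrix.det_succ_row _ p, Finset.sum_eq_single 0]
  · simp only [Matrix.of_apply, Fin.insertNth_apply_same, Fin.cons_zero, Pi.single_eq_same, mul_one,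
      abs_mul, abs_pow, abs_neg, abs_one, one_pow, one_mul]
    congr 2
    ext i j
    simp [Fin.tail]
  · intro j _ hj
    simp [hj]
  · simp

lemma zono_cons {N m : ℕ} (v : Fin (m+1) → Fin N → ℝ) :
    zono v = {x | ∃ y ∈ zono (Fin.tail v), ∃ s ∈ Set.Icc (-1:ℝ) 1, x = y + s • v 0} := by
  ext x
  constructor
  · rintro ⟨t, ht, rfl⟩
    refine ⟨_, ⟨Fin.tail t, ⟨fun i => ht.1 i.succ, fun i => ht.2 i.succ⟩, rfl⟩, t 0,
      ⟨ht.1 0, ht.2 0⟩, ?_⟩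
    simp only [Fin.sum_univ_succ, Fin.tail]
    rw [add_comm]
  · rintro ⟨_, ⟨t, ht, rfl⟩, s, hs, rfl⟩
    refine ⟨Fin.cons s t, ⟨?_, ?_⟩, ?_⟩
    · intro i
      refine Fin.cases ?_ (fun j => ?_) i
      · simpa using hs.1
      · simpa using ht.1 j
    · intro i
      refine Fin.cases ?_ (fun j => ?_) i
      · simpa using hs.2
      · simpa using ht.2 j
    · simp only [Fin.sum_univ_succ, Fin.tail, Fin.cons_zero, Fin.cons_succ]
      rw [add_comm]

lemma zono_map {ι : Type*} [Fintype ι] {N M : ℕ} (v : ι → Fin N → ℝ)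
    (T : (Fin N → ℝ) →ₗ[ℝ] (Fin M → ℝ)) : T '' zono v = zono (fun j => T (v j)) := by
  unfold zono
  rw [Set.image_image]
  simp

lemma det_map {ι : Type*} {N : ℕ} (v : ι → Fin N → ℝ) (f : Fin N → ι)
    (T : (Fin N → ℝ) →ₗ[ℝ] (Fin N → ℝ)) :
    Matrix.det (Matrix.of fun i => T (v (f i))) =
      LinearMap.det T * Matrix.det (Matrix.of fun i => v (f i)) := by
  rw [← LinearMap.det_toMatrix', mul_comm, ← Matrix.det_transpose (LinearMap.toMatrix' T),
    ← Matrix.det_mul]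
  congr 1
  ext i j
  have : T (v (f i)) = (LinearMap.toMatrix' T).mulVec (v (f i)) := by simp
  simp only [Matrix.of_apply, this, Matrix.mulVec, dotProduct, Matrix.mul_apply,
    Matrix.transpose_apply]
  exact Finset.sum_congr rfl fun _ _ => mul_comm _ _

lemma exists_map {N : ℕ} (v : Fin (N+1) → ℝ) (hv : v ≠ 0) :
    ∃ T : (Fin (N+1) → ℝ) ≃ₗ[ℝ] (Fin (N+1) → ℝ), T (Pi.single 0 1) = v := by
  obtain ⟨T, hT⟩ := SeparatingDual.exists_continuousLinearEquiv_apply_eq (R := ℝ)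
    (x := (Pi.single 0 1 : Fin (N+1) → ℝ)) (y := v) (by simp) hv
  exact ⟨T.toLinearEquiv, hT⟩

/-- The zonotope functional. -/
noncomputable def zsum {ι : Type*} [Fintype ι] {N : ℕ} (v : ι → Fin N → ℝ) : ℝ :=
  2 ^ N / (N.factorial : ℝ) * ∑ f : Fin N → ι, |Matrix.det (Matrix.of fun i => v (f i))|

lemma zsum_nonneg {ι : Type*} [Fintype ι] {N : ℕ} (v : ι → Fin N → ℝ) : 0 ≤ zsum v := by
  unfold zsum
  positivity

lemma zsum_map {ι : Type*} [Fintype ι] {N : ℕ} (v : ι → Fin N → ℝ)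
    (T : (Fin N → ℝ) →ₗ[ℝ] (Fin N → ℝ)) :
    zsum (fun j => T (v j)) = |LinearMap.det T| * zsum v := by
  unfold zsum
  simp_rw [det_map, abs_mul, ← Finset.mul_sum]
  ring

lemma zsum_e {N m : ℕ} (u : Fin m → Fin (N+1) → ℝ) :
    zsum (Fin.cons (Pi.single 0 1) u : Fin (m+1) → Fin (N+1) → ℝ) =
      zsum u + 2 * zsum (fun j => (Fin.tail (u j) : Fin N → ℝ)) := by
  unfold zsum
  rw [sum_split]
  · simp_rw [det_ins]
    simp only [Fin.cons_succ, Finset.sum_const, Finset.card_univ, Fintype.card_fin, nsmul_eq_mul]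
    rw [Nat.factorial_succ]
    have : (N.factorial : ℝ) ≠ 0 := by positivity
    push_cast
    field_simp
    ring
  · intro f i j hij hi hj
    rw [Matrix.det_zero_of_row_eq hij]
    · simp
    · ext k; simp [hi, hj]

lemma zsum_zero {N m : ℕ} (u : Fin m → Fin (N+1) → ℝ) :
    zsum (Fin.cons 0 u : Fin (m+1) → Fin (N+1) → ℝ) = zsum u := by
  unfold zsum
  congr 1
  symm
  refine Fintype.sum_of_injective (fun g i => (g i).succ) ?_ _ _ ?_ ?_
  · intro g g' h
    ext i
    have := congrFun h i
    simpa [Fin.ext_iff] using this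
  · intro f hf
    by_cases h0 : ∀ i, f i ≠ 0
    · exfalso; apply hf
      refine ⟨(fun i => (f i).pred (h0 i)), ?_⟩
      ext i; simp
    · push Not at h0
      obtain ⟨p, hp⟩ := h0
      rw [Matrix.det_eq_zero_of_row_eq_zero p]
      · simp
      · intro j; simp [hp]
  · intro g; simp

lemma vol_zono_fin (m : ℕ) : ∀ (N : ℕ) (v : Fin m → Fin N → ℝ),
    volume (zono v) = ENNReal.ofReal (zsum v) := by
  have base : ∀ (m : ℕ) (v : Fin m → Fin 0 → ℝ), volume (zono v) = ENNReal.ofReal (zsum v) := by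
    intro m v
    have : zono v = Set.univ := by
      have hn : (zono v).Nonempty := ⟨_, 0, ⟨by intro; simp, by intro; simp⟩, rfl⟩
      exact Subsingleton.eq_univ_of_nonempty hn
    rw [this]
    simp [zsum, volume_pi]
  induction m with
  | zero =>
    intro N v
    cases N with
    | zero => exact base _ _
    | succ N =>
      have : zono v ⊆ {0} := by
        rintro _ ⟨t, _, rfl⟩; simp
      rw [measure_mono_null this (by simp)]
      simp [zsum]
  | succ m ih =>
    intro N v
    cases N with
    | zero => exact base _ _
    | succ N =>
      obtain ⟨w, u, rfl⟩ : ∃ w u, v = (Fin.cons w u : Fin (m+1) → Fin (N+1) → ℝ) :=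
        ⟨v 0, Fin.tail v, by simp⟩
      by_cases hw : w = 0
      · subst hw
        rw [zsum_zero, ← ih, zono_cons]
        congr 1
        ext x
        simp only [Fin.tail_cons, Fin.cons_zero, smul_zero, add_zero]
        constructor
        · rintro ⟨y, hy, s, hs, rfl⟩; exact hy
        · intro hx; exact ⟨x, hx, 0, by simp, rfl⟩
      · obtain ⟨T, rfl⟩ := exists_map w hw
        have hu : (Fin.cons (T (Pi.single 0 1)) u : Fin (m+1) → Fin (N+1) → ℝ) =
            fun j => (T : (Fin (N+1) → ℝ) →ₗ[ℝ] (Fin (N+1) → ℝ))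
              ((Fin.cons (Pi.single 0 1) (fun j => T.symm (u j)) : Fin (m+1) → Fin (N+1) → ℝ) j) := by
          ext j : 1
          refine Fin.cases ?_ (fun i => ?_) j <;> simp
        rw [hu, zsum_map, ← zono_map, Measure.addHaar_image_linearMap,
          ENNReal.ofReal_mul (abs_nonneg _)]
        congr 1
        rw [zsum_e, zono_cons]
        simp only [Fin.tail_cons, Fin.cons_zero]
        rw [vol_add_seg (zono_compact _) (zono_convex _), ih,
          ENNReal.ofReal_add (zsum_nonneg _) (by have := zsum_nonneg (fun j => (Fin.tail (T.symm (u j)) : Fin N → ℝ)); positivity),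
          ENNReal.ofReal_mul (by norm_num), ← ih N]
        congr 2
        · simp
        · congr 1
          exact zono_map (fun j => T.symm (u j)) (LinearMap.funLeft ℝ ℝ Fin.succ)

lemma vol_zono {ι : Type*} [Fintype ι] {N : ℕ} (v : ι → Fin N → ℝ) :
    volume (zono v) = ENNReal.ofReal (zsum v) := by
  have e := Fintype.equivFin ι
  have h1 : zono v = zono (v ∘ e.symm) := by
    ext x
    constructor
    · rintro ⟨t, ht, rfl⟩
      refine ⟨t ∘ e.symm, ⟨fun i => ht.1 _, fun i => ht.2 _⟩, ?_⟩
      exact Equiv.sum_comp e.symm (fun j => t j • v j)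
    · rintro ⟨t, ht, rfl⟩
      refine ⟨t ∘ e, ⟨fun i => ht.1 _, fun i => ht.2 _⟩, ?_⟩
      simp only []
      rw [← Equiv.sum_comp e.symm]
      simp
  have h2 : zsum v = zsum (v ∘ e.symm) := by
    unfold zsum
    congr 1
    exact (Equiv.sum_comp (Equiv.arrowCongr (Equiv.refl (Fin N)) e.symm)
      (fun f => |Matrix.det (Matrix.of fun i => v (f i))|)).symm
  rw [h1, h2, vol_zono_fin]

lemma zono_eq_polar {ι : Type*} [Fintype ι] {N : ℕ} (v : ι → Fin N → ℝ) :
    zono v = {η | ∀ ξ : Fin N → ℝ, ∑ i, ξ i * η i ≤ ∑ j, |∑ i, ξ i * v j i|} := by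
  have hlin : ∀ (ξ : Fin N → ℝ) (t : ι → ℝ), ∑ i, ξ i * (∑ j, t j • v j) i
      = ∑ j, t j * ∑ i, ξ i * v j i := by
    intro ξ t
    simp only [Finset.sum_apply, Pi.smul_apply, smul_eq_mul, Finset.mul_sum]
    rw [Finset.sum_comm]
    exact Finset.sum_congr rfl fun _ _ => Finset.sum_congr rfl fun _ _ => by ring
  apply Set.Subset.antisymm
  · rintro _ ⟨t, ht, rfl⟩ ξ
    simp only []
    rw [hlin]
    refine Finset.sum_le_sum fun j _ => ?_
    refine (le_abs_self _).trans ?_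
    rw [abs_mul]
    have : |t j| ≤ 1 := abs_le.2 ⟨ht.1 j, ht.2 j⟩
    exact mul_le_of_le_one_left (abs_nonneg _) this
  · intro η hη
    by_contra hn
    obtain ⟨f, s, h1, h2⟩ := geometric_hahn_banach_closed_point (zono_convex v)
      (zono_compact v).isClosed hn
    have hf : ∀ x, f x = ∑ i, (f (Pi.single i 1)) * x i := by
      intro x
      conv_lhs => rw [pi_eq_sum_univ' x]
      simp [mul_comm]
    have hsg : ∀ c : SignType, (-1:ℝ) ≤ (c : ℝ) ∧ (c : ℝ) ≤ 1 := by
      intro c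
      cases c <;> simp
    have h3 := hη (fun i => f (Pi.single i 1))
    have h4 := h1 (∑ j, (SignType.sign (∑ i, f (Pi.single i 1) * v j i) : ℝ) • v j)
      ⟨fun j => (SignType.sign (∑ i, f (Pi.single i 1) * v j i) : ℝ), ⟨?_, ?_⟩, rfl⟩
    · rw [hf, hlin] at h4
      rw [hf] at h2
      simp only [sign_mul_self] at h4
      linarith
    · intro j
      exact (hsg _).1
    · intro j
      exact (hsg _).2

/-- Polar body of a support function. -/
def polar' {N : ℕ} (h : (Fin N → ℝ) → ℝ) : Set (Fin N → ℝ) :=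
  {η | ∀ ξ : Fin N → ℝ, ∑ i, ξ i * η i ≤ h ξ}

lemma vol_polar_le {N : ℕ} {h k : (Fin N → ℝ) → ℝ} {c : ℝ} (hc : 0 < c)
    (hk : ∀ ξ, h ξ ≤ c * k ξ) :
    volume (polar' h) ≤ ENNReal.ofReal (c ^ N) * volume (polar' k) := by
  have : polar' h ⊆ (fun x => c • x) '' polar' k := by
    intro η hη
    refine ⟨c⁻¹ • η, ?_, by simp [smul_smul, hc.ne']⟩
    intro ξ
    have h1 := (hη ξ).trans (hk ξ)
    have h2 : ∑ i, ξ i * (c⁻¹ • η) i = c⁻¹ * ∑ i, ξ i * η i := by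
      rw [Finset.mul_sum]
      exact Finset.sum_congr rfl fun _ _ => by simp; ring
    rw [h2, inv_mul_le_iff₀ hc]
    exact h1
  refine (measure_mono this).trans ?_
  rw [Set.image_smul, Measure.addHaar_smul]
  simp [abs_of_pos hc]

/-- The support function. -/
noncomputable def supp {X : Type*} [MeasurableSpace X] (ν : Measure X) {N : ℕ}
    (F : Fin N → X → ℝ) (ξ : Fin N → ℝ) : ℝ := ∫ x, |∑ n, ξ n * F n x| ∂ν

noncomputable def detInt {X : Type*} [MeasurableSpace X] (ν : Measure X) {N : ℕ}
    (F : Fin N → X → ℝ) : ℝ :=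
  ∫ x : Fin N → X, |Matrix.det (Matrix.of fun l n => F l (x n))| ∂(Measure.pi fun _ => ν)

lemma supp_simple {X : Type*} [MeasurableSpace X] (ν : Measure X) [SigmaFinite ν] {N : ℕ}
    (F : SimpleFunc X (Fin N → ℝ)) (hF : Integrable F ν) :
    volume (polar' (supp ν (fun n x => F x n))) =
      ENNReal.ofReal (2 ^ N / (N.factorial : ℝ) * detInt ν (fun n x => F x n)) := by
  classical
  let ι := {v // v ∈ F.range.filter (· ≠ 0)}
  letI : Fintype ι := Finset.fintypeCoeSort _
  let A : ι → Set X := fun j => F ⁻¹' {j.1}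
  have hA : ∀ j, MeasurableSet (A j) := fun j => F.measurableSet_fiber j.1
  have hAf : ∀ j, ν (A j) < ⊤ := by
    intro j
    have := (SimpleFunc.integrable_iff).1 hF j.1 (Finset.mem_filter.1 j.2).2
    exact this
  let w : ι → Fin N → ℝ := fun j => ν.real (A j) • j.1
  have hind : ∀ j, Integrable ((A j).indicator (1 : X → ℝ)) ν := fun j =>
    (integrable_indicator_iff (hA j)).2 (integrableOn_const (hAf j).ne)
  have hval : ∀ j, ∫ x, (A j).indicator (1 : X → ℝ) x ∂ν = ν.real (A j) := fun j =>
    integral_indicator_one (hA j)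
  -- support function
  have h1 : ∀ ξ, supp ν (fun n x => F x n) ξ = ∑ j, |∑ i, ξ i * w j i| := by
    intro ξ
    have hpt : ∀ x, |∑ n, ξ n * F x n| =
        ∑ j : ι, (A j).indicator (1 : X → ℝ) x * |∑ n, ξ n * j.1 n| := by
      intro x
      by_cases hx : F x = 0
      · have : ∀ j : ι, x ∉ A j := by
          intro j hj
          have hj' : F x = j.1 := hj
          exact (Finset.mem_filter.1 j.2).2 (hj'.symm.trans hx)
        simp [hx, this]
      · have hm : F x ∈ F.range.filter (· ≠ 0) := by simp [hx]
        rw [Finset.sum_eq_single (⟨F x, hm⟩ : ι)]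
        · have : x ∈ A ⟨F x, hm⟩ := rfl
          simp [this]
        · intro j _ hj
          have : x ∉ A j := by
            intro h; apply hj; apply Subtype.ext; exact (show F x = j.1 from h).symm
          simp [this]
        · simp
    unfold supp
    simp_rw [hpt]
    rw [integral_finsetSum _ (fun j _ => (hind j).mul_const _)]
    refine Finset.sum_congr rfl fun j _ => ?_
    rw [integral_mul_const, hval]
    have : ∑ i, ξ i * w j i = ν.real (A j) * ∑ i, ξ i * j.1 i := by
      rw [Finset.mul_sum]
      exact Finset.sum_congr rfl fun _ _ => by simp [w]; ring
    rw [this, abs_mul, abs_of_nonneg measureReal_nonneg]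
  have h2 : detInt ν (fun n x => F x n) = ∑ f : Fin N → ι, |Matrix.det (Matrix.of fun i => w (f i))| := by
    have hpt : ∀ x : Fin N → X, |Matrix.det (Matrix.of fun l n => F (x n) l)| =
        ∑ f : Fin N → ι, (∏ i, (A (f i)).indicator (1 : X → ℝ) (x i)) *
          |Matrix.det (Matrix.of fun i => (f i).1)| := by
      intro x
      rw [← Matrix.det_transpose]
      by_cases hx : ∃ i, F (x i) = 0
      · obtain ⟨i, hi⟩ := hx
        rw [Matrix.det_eq_zero_of_row_eq_zero i (by intro j; simp [hi]), abs_zero]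
        symm
        refine Finset.sum_eq_zero fun f _ => ?_
        have : x i ∉ A (f i) := by
          intro hj
          have hj' : F (x i) = (f i).1 := hj
          exact (Finset.mem_filter.1 (f i).2).2 (hj'.symm.trans hi)
        rw [Finset.prod_eq_zero (Finset.mem_univ i) (by simp [this]), zero_mul]
      · push Not at hx
        have hm : ∀ i, F (x i) ∈ F.range.filter (· ≠ 0) := fun i => by simp [hx i]
        rw [Finset.sum_eq_single (fun i => (⟨F (x i), hm i⟩ : ι))]
        · have : ∀ i, x i ∈ A ⟨F (x i), hm i⟩ := fun i => rfl
          simp only [Set.indicator_of_mem (this _), Pi.one_apply, Finset.prod_const_one, one_mul]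
          rfl
        · intro f _ hf
          obtain ⟨i, hi⟩ := Function.ne_iff.1 hf
          have : x i ∉ A (f i) := by
            intro h; apply hi; apply Subtype.ext; exact (show F (x i) = (f i).1 from h).symm
          rw [Finset.prod_eq_zero (Finset.mem_univ i) (by simp [this]), zero_mul]
        · simp
    unfold detInt
    simp_rw [hpt]
    rw [integral_finsetSum _ (fun f _ => (Integrable.fintype_prod (fun i => hind (f i))).mul_const _)]
    refine Finset.sum_congr rfl fun f _ => ?_
    rw [integral_mul_const, integral_fintype_prod_eq_prod]
    simp_rw [hval]
    have : (Matrix.of fun i => w (f i)) = Matrix.of fun i j =>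
        ν.real (A (f i)) * (Matrix.of fun i => (f i).1) i j := by
      ext i j; simp [w]
    rw [this, Matrix.det_mul_column, abs_mul, Finset.abs_prod]
    simp only [abs_of_nonneg measureReal_nonneg]
  have h3 : polar' (supp ν (fun n x => F x n)) = zono w := by
    rw [zono_eq_polar]
    unfold polar'
    simp_rw [h1]
  rw [h3, vol_zono, h2]
  rfl

lemma supp_sub_le {X : Type*} [MeasurableSpace X] (ν : Measure X) {N : ℕ}
    (F G : Fin N → X → ℝ) (hF : ∀ n, Integrable (F n) ν) (hG : ∀ n, Integrable (G n) ν)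
    (ξ : Fin N → ℝ) :
    supp ν F ξ ≤ supp ν G ξ + (∑ n, ∫ x, |F n x - G n x| ∂ν) * ‖ξ‖ := by
  unfold supp
  have hi : ∀ H : Fin N → X → ℝ, (∀ n, Integrable (H n) ν) →
      Integrable (fun x => |∑ n, ξ n * H n x|) ν := fun H hH =>
    (integrable_finsetSum _ fun n _ => (hH n).const_mul _).abs
  have hd : ∀ n, Integrable (fun x => |F n x - G n x|) ν := fun n => ((hF n).sub (hG n)).abs
  rw [← integral_finsetSum _ (fun n _ => hd n), ← integral_mul_const,
    ← integral_add (hi G hG) ((integrable_finsetSum _ fun n _ => hd n).mul_const _)]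
  refine integral_mono (hi F hF)
    ((hi G hG).add ((integrable_finsetSum _ fun n _ => hd n).mul_const _)) fun x => ?_
  simp only []
  have e : ∑ n, ξ n * F n x = ∑ n, ξ n * G n x + ∑ n, ξ n * (F n x - G n x) := by
    rw [← Finset.sum_add_distrib]
    exact Finset.sum_congr rfl fun _ _ => by ring
  rw [e]
  refine (abs_add_le _ _).trans (add_le_add le_rfl ?_)
  refine (Finset.abs_sum_le_sum_abs _ _).trans ?_
  rw [Finset.sum_mul]
  refine Finset.sum_le_sum fun n _ => ?_
  rw [abs_mul, mul_comm]
  exact mul_le_mul_of_nonneg_left (norm_le_pi_norm ξ n) (abs_nonneg _)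

lemma supp_smul {X : Type*} [MeasurableSpace X] (ν : Measure X) {N : ℕ}
    (F : Fin N → X → ℝ) (c : ℝ) (ξ : Fin N → ℝ) : supp ν F (c • ξ) = |c| * supp ν F ξ := by
  unfold supp
  rw [← integral_const_mul]
  congr 1
  ext x
  rw [← abs_mul, Finset.mul_sum]
  congr 1
  exact Finset.sum_congr rfl fun _ _ => by simp [mul_assoc]

lemma supp_nonneg {X : Type*} [MeasurableSpace X] (ν : Measure X) {N : ℕ}
    (F : Fin N → X → ℝ) (ξ : Fin N → ℝ) : 0 ≤ supp ν F ξ :=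
  integral_nonneg fun _ => abs_nonneg _

lemma supp_cont {X : Type*} [MeasurableSpace X] (ν : Measure X) {N : ℕ}
    (F : Fin N → X → ℝ) (hF : ∀ n, Integrable (F n) ν) : Continuous (supp ν F) := by
  rw [continuous_iff_continuousAt]
  intro ξ₀
  have hi : ∀ ξ : Fin N → ℝ, Integrable (fun x => ∑ n, ξ n * F n x) ν := fun ξ =>
    (integrable_finsetSum _ fun n _ => (hF n).const_mul _)
  have hle : ∀ ξ, |supp ν F ξ - supp ν F ξ₀| ≤ supp ν F (ξ - ξ₀) := by
    intro ξ
    unfold supp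
    rw [← integral_sub (hi ξ).abs (hi ξ₀).abs]
    refine (abs_integral_le_integral_abs).trans ?_
    refine integral_mono ((hi ξ).abs.sub (hi ξ₀).abs).abs (hi (ξ - ξ₀)).abs fun x => ?_
    refine (abs_abs_sub_abs_le_abs_sub _ _).trans (le_of_eq ?_)
    rw [← Finset.sum_sub_distrib]
    congr 1
    exact Finset.sum_congr rfl fun _ _ => by simp; ring
  have hle2 : ∀ ξ, supp ν F ξ ≤ (∑ n, ∫ x, |F n x| ∂ν) * ‖ξ‖ := by
    intro ξ
    have := supp_sub_le ν F (fun _ _ => 0) hF (fun _ => by simp) ξ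
    simpa [supp] using this
  rw [ContinuousAt, tendsto_iff_norm_sub_tendsto_zero]
  refine squeeze_zero (fun _ => norm_nonneg _)
    (fun ξ => (hle ξ).trans (hle2 _)) ?_
  have : Continuous fun ξ : Fin N → ℝ => (∑ n, ∫ x, |F n x| ∂ν) * ‖ξ - ξ₀‖ := by fun_prop
  simpa using this.tendsto ξ₀

lemma supp_lower {X : Type*} [MeasurableSpace X] (ν : Measure X) {N : ℕ}
    (F : Fin N → X → ℝ) (hF : ∀ n, Integrable (F n) ν)
    (hind : ∀ ξ : Fin N → ℝ, supp ν F ξ = 0 → ξ = 0) :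
    ∃ r > 0, ∀ ξ, r * ‖ξ‖ ≤ supp ν F ξ := by
  have key : ∃ r > 0, ∀ ξ ∈ Metric.sphere (0 : Fin N → ℝ) 1, r ≤ supp ν F ξ := by
    rcases (Metric.sphere (0 : Fin N → ℝ) 1).eq_empty_or_nonempty with h | h
    · exact ⟨1, one_pos, by simp [h]⟩
    · obtain ⟨ξ₀, h0, hm⟩ := (isCompact_sphere (0 : Fin N → ℝ) 1).exists_isMinOn h
        (supp_cont ν F hF).continuousOn
      refine ⟨supp ν F ξ₀, lt_of_le_of_ne (supp_nonneg _ _ _) ?_, fun ξ hξ => hm hξ⟩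
      intro h
      have := hind ξ₀ h.symm
      subst this
      simp at h0
  obtain ⟨r, hr, h⟩ := key
  refine ⟨r, hr, fun ξ => ?_⟩
  by_cases hξ : ξ = 0
  · subst hξ; simpa using supp_nonneg ν F 0
  · have hn : 0 < ‖ξ‖ := norm_pos_iff.2 hξ
    have := h (‖ξ‖⁻¹ • ξ) (by simp [norm_smul, hn.ne'])
    rw [supp_smul, abs_of_pos (inv_pos.2 hn), ← div_eq_inv_mul, le_div_iff₀ hn] at this
    exact this

open Filter Topology in
lemma approx {X : Type*} [MeasurableSpace X] (ν : Measure X) [SigmaFinite ν]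
    {N : ℕ} (F : Fin N → X → ℝ) (hF : ∀ n, Integrable (F n) ν) :
    ∃ G : ℕ → SimpleFunc X (Fin N → ℝ), (∀ k, Integrable (G k) ν) ∧
      Tendsto (fun k => ∑ n, ∫ x, |F n x - G k x n| ∂ν) atTop (𝓝 0) ∧
      Tendsto (fun k => detInt ν (fun n x => G k x n)) atTop (𝓝 (detInt ν F)) := by
  have hFm : AEMeasurable (fun x n => F n x) ν := aemeasurable_pi_lambda _ fun n => (hF n).aemeasurable
  let f := hFm.mk
  have hfm : Measurable f := hFm.measurable_mk
  have hff : ∀ᵐ x ∂ν, (fun n => F n x) = f x := hFm.ae_eq_mk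
  have hfi : Integrable f ν := by
    refine Integrable.congr ?_ hFm.ae_eq_mk
    exact Integrable.of_eval hF
  have hfn : ∀ n, Integrable (fun x => f x n) ν := fun n => hfi.eval n
  let G : ℕ → SimpleFunc X (Fin N → ℝ) := fun k =>
    SimpleFunc.approxOn f hfm Set.univ 0 (Set.mem_univ _) k
  have hGt : ∀ x, Tendsto (fun k => G k x) atTop (𝓝 (f x)) := fun x =>
    SimpleFunc.tendsto_approxOn hfm (Set.mem_univ _) (by simp)
  have hGb : ∀ k x, ‖G k x‖ ≤ 2 * ‖f x‖ := fun k x => by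
    have := SimpleFunc.norm_approxOn_zero_le hfm (Set.mem_univ 0) x k
    rw [two_mul]; exact this
  have hGi : ∀ k, Integrable (G k) ν := fun k =>
    (hfi.norm.const_mul 2).mono' (G k).aestronglyMeasurable (Eventually.of_forall (hGb k))
  refine ⟨G, hGi, ?_, ?_⟩
  · rw [show (0:ℝ) = ∑ n : Fin N, ∫ x, (0:ℝ) ∂ν by simp]
    refine tendsto_finsetSum _ fun n _ => ?_
    refine tendsto_integral_of_dominated_convergence (fun x => 3 * ‖f x‖) ?_
      (hfi.norm.const_mul _) ?_ ?_
    · intro k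
      exact ((hF n).sub ((hGi k).eval n)).abs.aestronglyMeasurable
    · intro k
      filter_upwards [hff] with x hx
      have hx : F n x = f x n := congrFun hx n
      rw [hx, Real.norm_eq_abs, abs_abs]
      have h1 : |f x n| ≤ ‖f x‖ := norm_le_pi_norm (f x) n
      have h2 : |G k x n| ≤ ‖G k x‖ := norm_le_pi_norm (G k x) n
      have h3 := hGb k x
      have h4 := abs_sub (f x n) (G k x n)
      linarith
    · filter_upwards [hff] with x hx
      have hx : F n x = f x n := congrFun hx n
      rw [hx]
      have h1 := ((tendsto_pi_nhds.1 (hGt x) n).const_sub (f x n)).abs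
      simpa using h1
  · have hd : detInt ν F = detInt ν (fun n x => f x n) := by
      unfold detInt
      refine integral_congr_ae ?_
      have : ∀ᵐ x : Fin N → X ∂(Measure.pi fun _ => ν), ∀ i, (fun n => F n (x i)) = f (x i) :=
        ae_all_iff.2 fun i => (Measure.quasiMeasurePreserving_eval (μ := fun _ : Fin N => ν) i).ae hff
      filter_upwards [this] with x hx
      congr 2
      ext l n
      exact congrFun (hx n) l
    rw [hd]
    unfold detInt
    refine tendsto_integral_of_dominated_convergence
      (fun x => (Fintype.card (Equiv.Perm (Fin N)) : ℝ) * ∏ i, (2 * ‖f (x i)‖)) ?_ ?_ ?_ ?_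
    · intro k
      refine Measurable.aestronglyMeasurable ?_
      have : ∀ l n, Measurable fun x : Fin N → X => G k (x n) l := fun l n =>
        (measurable_pi_apply l).comp ((G k).measurable.comp (measurable_pi_apply n))
      simp only [Matrix.det_apply', Matrix.of_apply]
      exact continuous_abs.measurable.comp (Finset.measurable_fun_sum _ fun σ _ =>
        (Finset.measurable_fun_prod _ fun i _ => this _ _).const_mul _)
    · exact (Integrable.fintype_prod (f := fun _ x => 2 * ‖f x‖)
        (fun i => hfi.norm.const_mul 2)).const_mul _
    · intro k
      refine Eventually.of_forall fun x => ?_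
      rw [Real.norm_eq_abs, abs_abs, Matrix.det_apply]
      refine (Finset.abs_sum_le_sum_abs _ _).trans ?_
      refine (Finset.sum_le_card_nsmul _ _ (∏ i, (2 * ‖f (x i)‖)) ?_).trans (by simp)
      intro σ _
      have : |Equiv.Perm.sign σ • ∏ i, Matrix.of (fun l n => G k (x n) l) (σ i) i| =
          ∏ i, |G k (x i) (σ i)| := by
        rw [← Finset.abs_prod]
        rcases Int.units_eq_one_or (Equiv.Perm.sign σ) with h | h <;> simp [h]
      rw [this]
      refine Finset.prod_le_prod (fun _ _ => abs_nonneg _) fun i _ => ?_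
      exact (norm_le_pi_norm (G k (x i)) (σ i)).trans (hGb k _)
    · refine Eventually.of_forall fun x => ?_
      have hc : Continuous fun M : Matrix (Fin N) (Fin N) ℝ => |M.det| := by fun_prop
      refine (hc.tendsto _).comp ?_
      refine tendsto_pi_nhds.2 fun l => tendsto_pi_nhds.2 fun n => ?_
      exact tendsto_pi_nhds.1 (hGt (x n)) l

open Filter Topology in
lemma main_aux {X : Type*} [MeasurableSpace X] (ν : Measure X) [SigmaFinite ν]
    {N : ℕ} (F : Fin N → X → ℝ) (hF : ∀ n, Integrable (F n) ν)
    (hind : ∀ ξ : Fin N → ℝ, supp ν F ξ = 0 → ξ = 0) :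
    volume (polar' (supp ν F)) =
      ENNReal.ofReal (2 ^ N / (N.factorial : ℝ) * detInt ν F) := by
  obtain ⟨r, hr, hlow⟩ := supp_lower ν F hF hind
  obtain ⟨G, hGi, hG1, hG2⟩ := approx ν F hF
  have hGn : ∀ k n, Integrable (fun x => G k x n) ν := fun k n => (hGi k).eval n
  set R := ENNReal.ofReal (2 ^ N / (N.factorial : ℝ) * detInt ν F) with hR
  have hlim : Tendsto (fun k => volume (polar' (supp ν (fun n x => G k x n)))) atTop (𝓝 R) := by
    simp_rw [fun k => supp_simple ν (G k) (hGi k)]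
    exact (ENNReal.continuous_ofReal.tendsto _).comp (hG2.const_mul _)
  have hev : ∀ ε : ℝ, 0 < ε → ∀ᶠ k in atTop,
      (∀ ξ, supp ν F ξ ≤ (1+ε) * supp ν (fun n x => G k x n) ξ) ∧
      (∀ ξ, supp ν (fun n x => G k x n) ξ ≤ (1+ε) * supp ν F ξ) := by
    intro ε hε
    have hpos : 0 < r * (ε / (1+ε)) := by positivity
    filter_upwards [hG1.eventually (gt_mem_nhds hpos)] with k hk
    have hb : ∀ ξ, (∑ n, ∫ x, |F n x - G k x n| ∂ν) * ‖ξ‖ ≤ (ε / (1+ε)) * supp ν F ξ := by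
      intro ξ
      calc _ ≤ (r * (ε / (1+ε))) * ‖ξ‖ := mul_le_mul_of_nonneg_right hk.le (norm_nonneg _)
        _ = (ε / (1+ε)) * (r * ‖ξ‖) := by ring
        _ ≤ _ := mul_le_mul_of_nonneg_left (hlow ξ) (by positivity)
    constructor
    · intro ξ
      have h1 := supp_sub_le ν F (fun n x => G k x n) hF (hGn k) ξ
      have h2 := hb ξ
      have h3 : supp ν F ξ * (1 - ε / (1+ε)) ≤ supp ν (fun n x => G k x n) ξ := by linarith
      have h4 : 1 - ε / (1+ε) = 1 / (1+ε) := by field_simp; ring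
      rw [h4, mul_one_div, div_le_iff₀ (by positivity)] at h3
      linarith
    · intro ξ
      have h1 := supp_sub_le ν (fun n x => G k x n) F (hGn k) hF ξ
      simp_rw [fun n x => abs_sub_comm (G k x n) (F n x)] at h1
      have h2 := hb ξ
      have h3 : ε / (1+ε) ≤ ε := div_le_self hε.le (by linarith)
      have h4 := mul_le_mul_of_nonneg_right h3 (supp_nonneg ν F ξ)
      linarith
  have hc : ∀ V : ENNReal, Tendsto (fun ε : ℝ => ENNReal.ofReal ((1+ε)^N) * V) (𝓝[>] 0) (𝓝 V) := by
    intro V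
    have h0 : Tendsto (fun ε : ℝ => ENNReal.ofReal ((1+ε)^N)) (𝓝[>] 0) (𝓝 1) := by
      have : Continuous fun ε : ℝ => ENNReal.ofReal ((1+ε)^N) :=
        ENNReal.continuous_ofReal.comp (by fun_prop)
      have h := this.tendsto 0
      simp only [add_zero, one_pow, ENNReal.ofReal_one] at h
      exact h.mono_left nhdsWithin_le_nhds
    have := ENNReal.Tendsto.mul_const (b := V) h0 (Or.inl one_ne_zero)
    simpa using this
  apply le_antisymm
  · refine ge_of_tendsto (hc R) ?_
    filter_upwards [self_mem_nhdsWithin] with ε hε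
    have hε : 0 < ε := hε
    refine ge_of_tendsto (ENNReal.Tendsto.const_mul hlim (Or.inr ENNReal.ofReal_ne_top)) ?_
    filter_upwards [hev ε hε] with k hk
    exact vol_polar_le (by positivity) hk.1
  · refine ge_of_tendsto (hc _) ?_
    filter_upwards [self_mem_nhdsWithin] with ε hε
    have hε : 0 < ε := hε
    refine le_of_tendsto hlim ?_
    filter_upwards [hev ε hε] with k hk
    exact vol_polar_le (by positivity) hk.2

/-- Theorem 3: the volume of the dual unit ball `B*` of the norm
`ξ ↦ ‖∑ ξ n F n‖₁` equals `(2^N / N!) ∫_{X^N} |Δ(F₁,…,F_N;x)| dν^N(x)`. -/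
theorem stmt8 {X : Type*} [MeasurableSpace X] (ν : Measure X) [SigmaFinite ν]
    (N : ℕ) (F : Fin N → X → ℝ) (hF : ∀ n, Integrable (F n) ν)
    (hind : ∀ ξ : Fin N → ℝ, (∫ x, |∑ n, ξ n * F n x| ∂ν) = 0 → ξ = 0)
    (B : Set (Fin N → ℝ)) (hB : B = {ξ | (∫ x, |∑ n, ξ n * F n x| ∂ν) ≤ 1})
    (Bstar : Set (Fin N → ℝ))
    (hBstar : Bstar = {η | ∀ ξ ∈ B, (∑ i, ξ i * η i) ≤ 1}) :
    volume Bstar = ENNReal.ofReal ((2 ^ N / (N.factorial : ℝ)) *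
      ∫ x : Fin N → X, |Matrix.det (Matrix.of fun l n => F l (x n))|
        ∂(Measure.pi fun _ => ν)) := by
  have hpol : Bstar = polar' (supp ν F) := by
    subst hB hBstar
    apply Set.Subset.antisymm
    · intro η hη ξ
      by_cases h0 : supp ν F ξ = 0
      · have : ξ = 0 := hind ξ h0
        rw [h0, this]; simp
      · have hp : 0 < supp ν F ξ := lt_of_le_of_ne (supp_nonneg _ _ _) (Ne.symm h0)
        have h1 : supp ν F ((supp ν F ξ)⁻¹ • ξ) ≤ 1 := by
          rw [supp_smul, abs_of_pos (inv_pos.2 hp), inv_mul_cancel₀ h0]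
        have h2 := hη ((supp ν F ξ)⁻¹ • ξ) h1
        have h3 : ∑ i, ((supp ν F ξ)⁻¹ • ξ) i * η i = (supp ν F ξ)⁻¹ * ∑ i, ξ i * η i := by
          rw [Finset.mul_sum]
          exact Finset.sum_congr rfl fun _ _ => by simp [mul_assoc]
        rw [h3, inv_mul_le_iff₀ hp, mul_one] at h2
        exact h2
    · intro η hη ξ hξ
      exact (hη ξ).trans hξ
  rw [hpol]
  exact main_aux ν F hF hind
end

section
/- Let $F_1,\dots,F_N$ be $\mathbb{R}$-linearly independent functions in $L^1(X,\nu)$ and let $T(\xi)=\sum_{n=1}^N \xi_n F_n$. Then there exist linearly independent points $b_1,\dots,b_N$ in $\mathbb{Z}^N$ such that $\prod_{n=1}^N \|T(b_n)\|_1 \le \int_{X^N} |\Delta(F_1,\dots,F_N;\mathbf{x})|\,d\nu^N(\mathbf{x})$, and the $\mathbb{Z}$-module generated by $b_1,\dots,b_N$ has index at most $N!$ in $\mathbb{Z}^N$. -/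
open MeasureTheory

namespace PLR
open Pointwise ENNReal

lemma bm_compact {A B : Set ℝ} (hA : IsCompact A) (hB : IsCompact B) (hA' : A.Nonempty)
    (hB' : B.Nonempty) : volume A + volume B ≤ volume (A + B) := by
  obtain ⟨a, haA, ha⟩ := hA.exists_isGreatest hA'
  obtain ⟨b, hbB, hb⟩ := hB.exists_isLeast hB'
  have h1 : volume ((fun x => x + b) '' A) = volume A := by
    simp
  have h2 : volume ((fun x => a + x) '' B) = volume B := by
    simp
  have hsub : ((fun x => x + b) '' A) ∪ ((fun x => a + x) '' B) ⊆ A + B := by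
    rintro z (⟨x, hx, rfl⟩ | ⟨x, hx, rfl⟩)
    · exact Set.add_mem_add hx hbB
    · exact Set.add_mem_add haA hx
  have hdis : AEDisjoint volume ((fun x => x + b) '' A) ((fun x => a + x) '' B) := by
    have : ((fun x => x + b) '' A) ∩ ((fun x => a + x) '' B) ⊆ {a + b} := by
      rintro z ⟨⟨x, hx, rfl⟩, ⟨y, hy, hxy⟩⟩
      have := ha hx
      have := hb hy
      simp only at hxy
      simp only [Set.mem_singleton_iff]
      linarith
    exact measure_mono_null this (by simp)
  have hm : NullMeasurableSet ((fun x => a + x) '' B) volume :=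
    (hB.image (by fun_prop)).measurableSet.nullMeasurableSet
  calc volume A + volume B = volume (((fun x => x + b) '' A) ∪ ((fun x => a + x) '' B)) := by
        rw [measure_union₀ hm hdis, h1, h2]
    _ ≤ _ := measure_mono hsub

lemma bm {A B : Set ℝ} (hA : MeasurableSet A) (hB : MeasurableSet B) (hA' : A.Nonempty)
    (hB' : B.Nonempty) : volume A + volume B ≤ volume (A + B) := by
  obtain ⟨a, ha⟩ := hA'
  obtain ⟨b, hb⟩ := hB'
  have key : ∀ r < volume A, ∀ s < volume B, r + s ≤ volume (A + B) := by
    intro r hr s hs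
    obtain ⟨K, hK, hKc, hrK⟩ := hA.exists_lt_isCompact hr
    obtain ⟨K', hK', hKc', hrK'⟩ := hB.exists_lt_isCompact hs
    have := bm_compact (hKc.union (isCompact_singleton (x := a)))
      (hKc'.union (isCompact_singleton (x := b))) (by simp) (by simp)
    calc r + s ≤ volume (K ∪ {a}) + volume (K' ∪ {b}) :=
          add_le_add (hrK.le.trans (measure_mono Set.subset_union_left))
            (hrK'.le.trans (measure_mono Set.subset_union_left))
      _ ≤ _ := this
      _ ≤ _ := measure_mono (Set.add_subset_add (Set.union_subset hK (by simpa))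
            (Set.union_subset hK' (by simpa)))
  · by_cases h1 : volume A = 0
    · rw [h1, zero_add]
      calc volume B = volume ((fun x => a + x) '' B) := by simp
        _ ≤ _ := measure_mono (by rintro z ⟨x, hx, rfl⟩; exact Set.add_mem_add ha hx)
    by_cases h2 : volume B = 0
    · rw [h2, add_zero]
      calc volume A = volume ((fun x => x + b) '' A) := by simp
        _ ≤ _ := measure_mono (by rintro z ⟨x, hx, rfl⟩; exact Set.add_mem_add hx hb)
    refine le_of_forall_lt fun c hc => ?_
    obtain ⟨r, hr, s, hs, hrs⟩ := ENNReal.exists_lt_add_of_lt_add hc h1 h2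
    exact hrs.trans_le (key r hr s hs)

lemma pl_norm {f k h : ℝ → ℝ} (hf : Measurable f) (hk : Measurable k) (hh : Measurable h)
    (hf0 : ∀ x, 0 ≤ f x) (hk0 : ∀ x, 0 ≤ k x) (hh0 : ∀ x, 0 ≤ h x)
    (hf1 : ∀ x, f x ≤ 1) (hk1 : ∀ x, k x ≤ 1)
    (hfs : ∀ t < 1, ∃ x, t < f x) (hks : ∀ t < 1, ∃ x, t < k x)
    {a b : ℝ} (ha : 0 < a) (hb : 0 < b) (hab : a + b = 1)
    (H : ∀ x y, f x ^ a * k y ^ b ≤ h (a * x + b * y)) :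
    ENNReal.ofReal a * (∫⁻ x, ENNReal.ofReal (f x)) +
      ENNReal.ofReal b * (∫⁻ x, ENNReal.ofReal (k x))
      ≤ ∫⁻ x, ENNReal.ofReal (h x) := by
  rw [lintegral_eq_lintegral_meas_lt _ (Filter.Eventually.of_forall hf0) hf.aemeasurable,
    lintegral_eq_lintegral_meas_lt _ (Filter.Eventually.of_forall hk0) hk.aemeasurable,
    lintegral_eq_lintegral_meas_lt _ (Filter.Eventually.of_forall hh0) hh.aemeasurable]
  have mf : Measurable fun t : ℝ => volume {x | t < f x} :=
    Antitone.measurable (fun s t hst => measure_mono (fun x hx => lt_of_le_of_lt hst hx))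
  have mk : Measurable fun t : ℝ => volume {x | t < k x} :=
    Antitone.measurable (fun s t hst => measure_mono (fun x hx => lt_of_le_of_lt hst hx))
  rw [← lintegral_const_mul _ mf, ← lintegral_const_mul _ mk,
    ← lintegral_add_left (by fun_prop)]
  refine setLIntegral_mono' measurableSet_Ioi ?_
  intro t ht
  have ht : 0 < t := ht
  by_cases ht1 : t < 1
  · obtain ⟨x0, hx0⟩ := hfs t ht1
    obtain ⟨y0, hy0⟩ := hks t ht1
    have e1 : ENNReal.ofReal a * volume {x | t < f x} = volume (a • {x | t < f x}) := by
      rw [Measure.addHaar_smul]; simp [abs_of_pos ha]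
    have e2 : ENNReal.ofReal b * volume {x | t < k x} = volume (b • {x | t < k x}) := by
      rw [Measure.addHaar_smul]; simp [abs_of_pos hb]
    rw [e1, e2]
    refine (bm ?_ ?_ ?_ ?_).trans (measure_mono ?_)
    · exact (measurableSet_lt measurable_const hf).const_smul₀ a
    · exact (measurableSet_lt measurable_const hk).const_smul₀ b
    · exact ⟨_, Set.smul_mem_smul_set (a := a) (show x0 ∈ {x | t < f x} from hx0)⟩
    · exact ⟨_, Set.smul_mem_smul_set (a := b) (show y0 ∈ {x | t < k x} from hy0)⟩
    · rintro z ⟨_, ⟨x, hx, rfl⟩, _, ⟨y, hy, rfl⟩, rfl⟩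
      have hx : t < f x := hx
      have hy : t < k y := hy
      refine lt_of_lt_of_le ?_ (H x y)
      calc t = t ^ a * t ^ b := by rw [← Real.rpow_add ht, hab, Real.rpow_one]
        _ < f x ^ a * k y ^ b := by
          apply mul_lt_mul'' <;> first | positivity | skip
          · exact Real.rpow_lt_rpow ht.le hx ha
          · exact Real.rpow_lt_rpow ht.le hy hb
  · have e1 : {x | t < f x} = ∅ := by
      ext x; simp; linarith [hf1 x, not_lt.1 ht1]
    have e2 : {x | t < k x} = ∅ := by
      ext x; simp; linarith [hk1 x, not_lt.1 ht1]
    rw [e1, e2]; simp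


lemma amgm {a b : ℝ} (ha : 0 < a) (hb : 0 < b) (hab : a + b = 1) (x y : ℝ≥0∞) :
    x ^ a * y ^ b ≤ ENNReal.ofReal a * x + ENNReal.ofReal b * y := by
  by_cases hx : x = ⊤
  · subst hx
    rw [ENNReal.mul_top (by simpa using ha), top_add]; exact le_top
  by_cases hy : y = ⊤
  · subst hy
    rw [ENNReal.mul_top (by simpa using hb), add_top]; exact le_top
  lift x to NNReal using hx
  lift y to NNReal using hy
  have := NNReal.geom_mean_le_arith_mean2_weighted ⟨a, ha.le⟩ ⟨b, hb.le⟩ x y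
    (NNReal.eq hab)
  rw [ENNReal.ofReal_eq_coe_nnreal ha.le, ENNReal.ofReal_eq_coe_nnreal hb.le,
    ← ENNReal.coe_rpow_of_nonneg _ ha.le, ← ENNReal.coe_rpow_of_nonneg _ hb.le]
  exact_mod_cast this

lemma pl_bdd {f k h : ℝ → ℝ≥0∞} (hf : Measurable f) (hk : Measurable k) (hh : Measurable h)
    {a b : ℝ} (ha : 0 < a) (hb : 0 < b) (hab : a + b = 1)
    (hfb : ⨆ x, f x ≠ ⊤) (hkb : ⨆ x, k x ≠ ⊤)
    (H : ∀ x y, f x ^ a * k y ^ b ≤ h (a * x + b * y)) :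
    (∫⁻ x, f x) ^ a * (∫⁻ x, k x) ^ b ≤ ∫⁻ x, h x := by
  set A := ⨆ x, f x with hA
  set B := ⨆ x, k x with hB
  have hfA : ∀ x, f x ≤ A := le_iSup f
  have hkB : ∀ x, k x ≤ B := le_iSup k
  by_cases hA0 : A = 0
  · have : ∀ x, f x = 0 := fun x => le_antisymm (hA0 ▸ hfA x) zero_le
    simp [this, ENNReal.zero_rpow_of_pos ha]
  by_cases hB0 : B = 0
  · have : ∀ x, k x = 0 := fun x => le_antisymm (hB0 ▸ hkB x) zero_le
    simp [this, ENNReal.zero_rpow_of_pos hb]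
  set C := A ^ a * B ^ b with hC
  have hAa : A ^ a ≠ 0 := by simp [ENNReal.rpow_eq_zero_iff, hA0, hfb]
  have hBb : B ^ b ≠ 0 := by simp [ENNReal.rpow_eq_zero_iff, hB0, hkb]
  have hAa' : A ^ a ≠ ⊤ := by simp [ENNReal.rpow_eq_top_iff, hA0, hfb]
  have hBb' : B ^ b ≠ ⊤ := by simp [ENNReal.rpow_eq_top_iff, hB0, hkb]
  have hC0 : C ≠ 0 := mul_ne_zero hAa hBb
  have hCt : C ≠ ⊤ := ENNReal.mul_ne_top hAa' hBb'
  have q1 : ∀ x, f x / A ≤ 1 := fun x => ENNReal.div_le_of_le_mul (by simpa using hfA x)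
  have q2 : ∀ x, k x / B ≤ 1 := fun x => ENNReal.div_le_of_le_mul (by simpa using hkB x)
  have q1t : ∀ x, f x / A ≠ ⊤ := fun x => ne_top_of_le_ne_top one_ne_top (q1 x)
  have q2t : ∀ x, k x / B ≠ ⊤ := fun x => ne_top_of_le_ne_top one_ne_top (q2 x)
  have q3t : ∀ x, min (h x / C) 1 ≠ ⊤ := fun x => ne_top_of_le_ne_top one_ne_top (min_le_right _ _)
  have sup : ∀ (g : ℝ → ℝ≥0∞) (M : ℝ≥0∞), M = ⨆ x, g x → M ≠ 0 → M ≠ ⊤ →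
      (∀ x, g x / M ≠ ⊤) → ∀ t : ℝ, t < 1 → ∃ x, t < (g x / M).toReal := by
    intro g M hM hM0 hMt hgt t ht
    by_cases ht0 : t < 0
    · exact ⟨0, ht0.trans_le ENNReal.toReal_nonneg⟩
    push Not at ht0
    have : ENNReal.ofReal t * M < ⨆ x, g x := by
      rw [← hM]
      calc ENNReal.ofReal t * M < 1 * M :=
            ENNReal.mul_lt_mul_left hM0 hMt (by simpa using ht)
        _ = M := one_mul M
    obtain ⟨x, hx⟩ := lt_iSup_iff.1 this
    refine ⟨x, ?_⟩
    rw [← ENNReal.ofReal_lt_iff_lt_toReal ht0 (hgt x)]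
    exact (ENNReal.lt_div_iff_mul_lt (Or.inl hM0) (Or.inl hMt)).2 hx
  have key := pl_norm (f := fun x => (f x / A).toReal) (k := fun x => (k x / B).toReal)
    (h := fun x => (min (h x / C) 1).toReal) (by fun_prop) (by fun_prop) (by fun_prop)
    (fun _ => toReal_nonneg) (fun _ => toReal_nonneg) (fun _ => toReal_nonneg)
    (fun x => ENNReal.toReal_le_of_le_ofReal zero_le_one (by simpa using q1 x))
    (fun x => ENNReal.toReal_le_of_le_ofReal zero_le_one (by simpa using q2 x))
    (sup f A hA hA0 hfb q1t) (sup k B hB hB0 hkb q2t) ha hb hab ?_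
  · simp only [ENNReal.ofReal_toReal (q1t _), ENNReal.ofReal_toReal (q2t _),
      ENNReal.ofReal_toReal (q3t _)] at key
    have k2 := (amgm ha hb hab _ _).trans key
    have e1 : ∫⁻ x, f x / A = (∫⁻ x, f x) / A := by
      simp only [div_eq_mul_inv]; rw [lintegral_mul_const _ hf]
    have e2 : ∫⁻ x, k x / B = (∫⁻ x, k x) / B := by
      simp only [div_eq_mul_inv]; rw [lintegral_mul_const _ hk]
    have e3 : ∫⁻ x, min (h x / C) 1 ≤ (∫⁻ x, h x) / C := by
      simp only [div_eq_mul_inv]; rw [← lintegral_mul_const _ hh]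
      exact lintegral_mono fun x => min_le_left _ _
    rw [e1, e2, ENNReal.div_rpow_of_nonneg _ _ ha.le, ENNReal.div_rpow_of_nonneg _ _ hb.le] at k2
    have k3 := k2.trans e3
    rw [ENNReal.le_div_iff_mul_le (Or.inl hC0) (Or.inl hCt)] at k3
    refine le_trans (le_of_eq ?_) k3
    rw [hC]
    calc _ = ((∫⁻ x, f x) ^ a / A ^ a * A ^ a) * ((∫⁻ x, k x) ^ b / B ^ b * B ^ b) := by
          rw [ENNReal.div_mul_cancel hAa hAa', ENNReal.div_mul_cancel hBb hBb']
      _ = _ := by ring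
  · intro x y
    rw [ENNReal.toReal_rpow, ENNReal.toReal_rpow, ← ENNReal.toReal_mul]
    refine ENNReal.toReal_mono (q3t _) (le_min ?_ ?_)
    · rw [ENNReal.div_rpow_of_nonneg _ _ ha.le, ENNReal.div_rpow_of_nonneg _ _ hb.le,
        ENNReal.le_div_iff_mul_le (Or.inl hC0) (Or.inl hCt)]
      refine le_trans (le_of_eq ?_) (H x y)
      rw [hC]
      calc _ = (f x ^ a / A ^ a * A ^ a) * (k y ^ b / B ^ b * B ^ b) := by ring
        _ = _ := by rw [ENNReal.div_mul_cancel hAa hAa', ENNReal.div_mul_cancel hBb hBb']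
    · exact mul_le_one' (ENNReal.rpow_le_one (q1 x) ha.le) (ENNReal.rpow_le_one (q2 y) hb.le)

lemma lintegral_trunc {f : ℝ → ℝ≥0∞} (hf : Measurable f) :
    ∫⁻ x, f x = ⨆ n : ℕ, ∫⁻ x, min (f x) n := by
  rw [← lintegral_iSup (fun n => by fun_prop)]
  · congr 1; ext x
    refine le_antisymm ?_ (iSup_le fun n => min_le_left _ _)
    refine le_of_forall_lt fun c hc => ?_
    obtain ⟨n, hn⟩ := ENNReal.exists_nat_gt hc.ne_top
    exact lt_iSup_iff.2 ⟨n, lt_min hc hn⟩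
  · intro m n hmn x
    exact min_le_min_left _ (by exact_mod_cast hmn)

lemma pl {f k h : ℝ → ℝ≥0∞} (hf : Measurable f) (hk : Measurable k) (hh : Measurable h)
    {a b : ℝ} (ha : 0 < a) (hb : 0 < b) (hab : a + b = 1)
    (H : ∀ x y, f x ^ a * k y ^ b ≤ h (a * x + b * y)) :
    (∫⁻ x, f x) ^ a * (∫⁻ x, k x) ^ b ≤ ∫⁻ x, h x := by
  have step : ∀ n m : ℕ, (∫⁻ x, min (f x) n) ^ a * (∫⁻ x, min (k x) m) ^ b ≤ ∫⁻ x, h x := by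
    intro n m
    refine pl_bdd (by fun_prop) (by fun_prop) hh ha hb hab ?_ ?_ ?_
    · exact ne_top_of_le_ne_top (natCast_ne_top n) (iSup_le fun x => min_le_right _ _)
    · exact ne_top_of_le_ne_top (natCast_ne_top m) (iSup_le fun x => min_le_right _ _)
    · intro x y
      exact le_trans (mul_le_mul' (ENNReal.rpow_le_rpow (min_le_left _ _) ha.le)
        (ENNReal.rpow_le_rpow (min_le_left _ _) hb.le)) (H x y)
  have pw : ∀ (c : ℝ) (_ : 0 < c) (u : ℕ → ℝ≥0∞), (⨆ n, u n) ^ c = ⨆ n, u n ^ c := by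
    intro c hc u
    exact (ENNReal.orderIsoRpow c hc).map_iSup u
  rw [lintegral_trunc hf, lintegral_trunc hk, pw a ha, pw b hb, ENNReal.iSup_mul]
  refine iSup_le fun n => ?_
  rw [ENNReal.mul_iSup]
  exact iSup_le fun m => step n m

/-- Log-concavity for extended nonnegative valued functions. -/
def LC {E : Type*} [AddCommGroup E] [Module ℝ E] (G : E → ℝ≥0∞) : Prop :=
  ∀ a b : ℝ, 0 < a → 0 < b → a + b = 1 → ∀ x y, G x ^ a * G y ^ b ≤ G (a • x + b • y)

lemma LC.marginal1 {E : Type*} [AddCommGroup E] [Module ℝ E] [MeasurableSpace E]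
    {G : E × ℝ → ℝ≥0∞} (hG : Measurable G) (h : LC G) : LC fun e => ∫⁻ t, G (e, t) := by
  intro a b ha hb hab x y
  refine pl (by fun_prop) (by fun_prop) (by fun_prop) ha hb hab ?_
  intro s t
  simpa using h a b ha hb hab (x, s) (y, t)

lemma LC.marginal {E : Type*} [AddCommGroup E] [Module ℝ E] [MeasurableSpace E] (n : ℕ) :
    ∀ {G : E × (Fin n → ℝ) → ℝ≥0∞} (_ : Measurable G) (_ : LC G),
      LC fun e => ∫⁻ t, G (e, t) := by
  induction n with
  | zero =>
    intro G hG h a b ha hb hab x y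
    simp only [Measure.volume_pi_eq_dirac (0 : Fin 0 → ℝ), lintegral_dirac]
    simpa using h a b ha hb hab (x, 0) (y, 0)
  | succ n ih =>
    intro G hG h
    have e : ∀ x, ∫⁻ t, G (x, t) = ∫⁻ v : Fin n → ℝ, ∫⁻ t : ℝ, G (x, Fin.cons t v) := by
      intro x
      have mp := (volume_preserving_piFinSuccAbove (fun _ : Fin (n+1) => ℝ) 0).symm
      rw [← mp.lintegral_comp (by fun_prop), Measure.volume_eq_prod, lintegral_prod_symm]
      · simp [MeasurableEquiv.piFinSuccAbove, Fin.insertNthEquiv, Fin.insertNth_zero']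
      · apply Measurable.aemeasurable
        exact (hG.comp (measurable_const.prodMk measurable_id)).comp (MeasurableEquiv.measurable _)
    simp only [e]
    have m0 : Measurable fun p : (E × (Fin n → ℝ)) × ℝ =>
        (p.1.1, (Fin.cons p.2 p.1.2 : Fin (n+1) → ℝ)) := by
      refine Measurable.prodMk (by fun_prop) ?_
      rw [measurable_pi_iff]
      intro i
      refine Fin.cases ?_ (fun j => ?_) i
      · simpa using measurable_snd
      · simp only [Fin.cons_succ]; fun_prop
    have L1 : LC fun p : (E × (Fin n → ℝ)) × ℝ =>
        G (p.1.1, (Fin.cons p.2 p.1.2 : Fin (n+1) → ℝ)) := by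
      intro a b ha hb hab x y
      refine (h a b ha hb hab _ _).trans (le_of_eq ?_)
      congr 1
      ext i
      · simp
      · refine Fin.cases ?_ (fun j => ?_) i <;> simp
    exact ih (Measurable.lintegral_prod_right' (hG.comp m0)) (LC.marginal1 (hG.comp m0) L1)

lemma LC.mul_le {g : ℝ → ℝ≥0∞} (h : LC g) {x y : ℝ} (hx : 0 < x) (hy : 0 < y) :
    g (x + y) * g 0 ≤ g x * g y := by
  have hxy : 0 < x + y := add_pos hx hy
  have h1 := h (x / (x + y)) (y / (x + y)) (div_pos hx hxy) (div_pos hy hxy)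
    (by field_simp) (x + y) 0
  have h2 := h (x / (x + y)) (y / (x + y)) (div_pos hx hxy) (div_pos hy hxy)
    (by field_simp) 0 (x + y)
  have e1 : (x / (x + y)) • (x + y) + (y / (x + y)) • (0:ℝ) = x := by
    simp; field_simp
  have e2 : (x / (x + y)) • (0:ℝ) + (y / (x + y)) • (x + y) = y := by
    simp; field_simp
  rw [e1] at h1
  rw [e2] at h2
  have pw : ∀ z : ℝ≥0∞, z ^ (x / (x + y)) * z ^ (y / (x + y)) = z := by
    intro z
    rw [← ENNReal.rpow_add_of_nonneg _ _ (div_pos hx hxy).le (div_pos hy hxy).le, ← add_div,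
      div_self hxy.ne', ENNReal.rpow_one]
  refine le_trans (le_of_eq ?_) (mul_le_mul' h1 h2)
  calc g (x + y) * g 0 = (g (x + y) ^ (x / (x + y)) * g (x + y) ^ (y / (x + y))) *
        (g 0 ^ (x / (x + y)) * g 0 ^ (y / (x + y))) := by rw [pw, pw]
    _ = _ := by ring

lemma LC.half {g : ℝ → ℝ≥0∞} (hg : Measurable g) (h : LC g) :
    g 0 * ∫⁻ t in Set.Ioi 0, ENNReal.ofReal t * g t ≤ (∫⁻ t in Set.Ioi 0, g t) ^ 2 := by
  set u : ℝ → ℝ≥0∞ := (Set.Ioi (0:ℝ)).indicator g with hu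
  have mu : Measurable u := hg.indicator measurableSet_Ioi
  have e0 : ∫⁻ t in Set.Ioi 0, g t = ∫⁻ t, u t := (lintegral_indicator measurableSet_Ioi g).symm
  have e1 : (∫⁻ t, u t) ^ 2 = ∫⁻ t, ∫⁻ x, u x * u (t - x) := by
    rw [lintegral_lintegral_swap (by fun_prop), sq, ← lintegral_mul_const _ mu]
    congr 1; ext x
    rw [lintegral_const_mul _ (by fun_prop), lintegral_sub_right_eq_self]
  rw [e0, e1, ← lintegral_const_mul _ (by fun_prop), ← lintegral_indicator measurableSet_Ioi]
  refine lintegral_mono fun t => ?_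
  by_cases ht : t ∈ Set.Ioi (0:ℝ)
  · rw [Set.indicator_of_mem ht]
    calc g 0 * (ENNReal.ofReal t * g t) = ∫⁻ x in Set.Ioo 0 t, g t * g 0 := by
          simp; ring
      _ ≤ ∫⁻ x in Set.Ioo 0 t, u x * u (t - x) := by
          refine setLIntegral_mono' measurableSet_Ioo fun x hx => ?_
          rw [hu, Set.indicator_of_mem (by exact hx.1),
            Set.indicator_of_mem (by simpa using hx.2)]
          simpa using h.mul_le hx.1 (sub_pos.2 hx.2)
      _ ≤ _ := setLIntegral_le_lintegral _ _
  · rw [Set.indicator_of_notMem ht]; exact zero_le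

lemma lintegral_even {u : ℝ → ℝ≥0∞} (he : ∀ t, u (-t) = u t) :
    ∫⁻ t, u t = 2 * ∫⁻ t in Set.Ioi 0, u t := by
  have e1 : ∫⁻ t in Set.Iio 0, u t = ∫⁻ t in Set.Ioi 0, u t := by
    have := (Measure.measurePreserving_neg (volume : Measure ℝ)).setLIntegral_comp_preimage_emb
      (MeasurableEquiv.neg ℝ).measurableEmbedding u (Set.Ioi 0)
    simpa [he] using this
  have e2 : ∫⁻ t in Set.Iic 0, u t = ∫⁻ t in Set.Iio 0, u t :=
    setLIntegral_congr Iio_ae_eq_Iic.symm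
  rw [two_mul]
  nth_rw 1 [← e1]
  rw [← e2, ← lintegral_add_compl u (measurableSet_Iic (a := (0:ℝ)))]
  simp

lemma LC.moment {g : ℝ → ℝ≥0∞} (hg : Measurable g) (h : LC g) (he : ∀ t, g (-t) = g t) :
    2 * (g 0 * ∫⁻ t, ENNReal.ofReal |t| * g t) ≤ (∫⁻ t, g t) ^ 2 := by
  rw [lintegral_even he, lintegral_even (u := fun t => ENNReal.ofReal |t| * g t)
    (by intro t; simp [he])]
  have e : ∫⁻ t in Set.Ioi 0, ENNReal.ofReal |t| * g t =
      ∫⁻ t in Set.Ioi 0, ENNReal.ofReal t * g t :=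
    setLIntegral_congr_fun measurableSet_Ioi fun t ht => by
      simp only [abs_of_pos (show (0:ℝ) < t from ht)]
  rw [e]
  calc _ = 4 * (g 0 * ∫⁻ t in Set.Ioi 0, ENNReal.ofReal t * g t) := by ring
    _ ≤ 4 * (∫⁻ t in Set.Ioi 0, g t) ^ 2 := by gcongr; exact h.half hg
    _ = _ := by ring

end PLR

namespace PLR
open Pointwise ENNReal

lemma lintegral_pi_succ {X : Type*} [MeasurableSpace X] (ν : Measure X) [SigmaFinite ν] {n : ℕ}
    (i : Fin (n + 1)) {H : (Fin (n + 1) → X) → ℝ≥0∞} (hH : Measurable H) :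
    ∫⁻ x, H x ∂(Measure.pi fun _ => ν) =
      ∫⁻ t, ∫⁻ v, H (i.insertNth t v) ∂(Measure.pi fun _ => ν) ∂ν := by
  have mp := (measurePreserving_piFinSuccAbove (fun _ : Fin (n+1) => ν) i).symm
  rw [← mp.lintegral_comp hH, lintegral_prod]
  · rfl
  · exact (hH.comp (MeasurableEquiv.measurable _)).aemeasurable

lemma lintegral_pi_succ' {X : Type*} [MeasurableSpace X] (ν : Measure X) [SigmaFinite ν] {n : ℕ}
    (i : Fin (n + 1)) {H : (Fin (n + 1) → X) → ℝ≥0∞} (hH : Measurable H) :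
    ∫⁻ x, H x ∂(Measure.pi fun _ => ν) =
      ∫⁻ v, ∫⁻ t, H (i.insertNth t v) ∂ν ∂(Measure.pi fun _ => ν) := by
  have mp := (measurePreserving_piFinSuccAbove (fun _ : Fin (n+1) => ν) i).symm
  rw [← mp.lintegral_comp hH, lintegral_prod_symm]
  · rfl
  · exact (hH.comp (MeasurableEquiv.measurable _)).aemeasurable

lemma lintegral_exp_abs {l : ℝ} (hl : 0 < l) :
    ∫⁻ t : ℝ, ENNReal.ofReal (Real.exp (-(l * |t|))) = ENNReal.ofReal (2 / l) := by
  rw [lintegral_even (by simp)]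
  have e : ∫⁻ t in Set.Ioi (0:ℝ), ENNReal.ofReal (Real.exp (-(l * |t|))) =
      ∫⁻ t in Set.Ioi (0:ℝ), ENNReal.ofReal (Real.exp (-l * t)) :=
    setLIntegral_congr_fun measurableSet_Ioi fun t ht => by
      simp only [abs_of_pos (show (0:ℝ) < t from ht)]; ring_nf
  rw [e, ← ofReal_integral_eq_lintegral_ofReal (integrableOn_exp_mul_Ioi (by linarith) 0)
    (Filter.Eventually.of_forall fun _ => (Real.exp_pos _).le),
    integral_exp_mul_Ioi (by linarith)]
  rw [show (2:ℝ≥0∞) = ENNReal.ofReal 2 by simp, ← ENNReal.ofReal_mul (by norm_num)]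
  congr 1; simp; field_simp

lemma lintegral_exp_sum : ∀ {n : ℕ} {l : Fin n → ℝ} (_ : ∀ i, 0 < l i),
    ∫⁻ t : Fin n → ℝ, ENNReal.ofReal (Real.exp (-∑ i, l i * |t i|)) =
      ∏ i, ENNReal.ofReal (2 / l i) := by
  intro n
  induction n with
  | zero =>
    intro l hl
    simp [Measure.volume_pi_eq_dirac (0 : Fin 0 → ℝ)]
  | succ n ih =>
    intro l hl
    rw [volume_pi, lintegral_pi_succ volume 0 (by fun_prop), Fin.prod_univ_succ,
      ← ih (l := fun j => l j.succ) (fun j => hl _), ← lintegral_exp_abs (hl 0),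
      ← lintegral_mul_const _ (by fun_prop)]
    congr 1; ext t
    rw [← lintegral_const_mul _ (by fun_prop), volume_pi]
    congr 1; ext v
    rw [← ENNReal.ofReal_mul (Real.exp_pos _).le, ← Real.exp_add, Fin.sum_univ_succ]
    simp
    rw [add_comm]

section norm
variable {n : ℕ} (p : Seminorm ℝ (Fin n → ℝ))

lemma sn_cont : Continuous p :=
  (ConvexOn.locallyLipschitz p.convexOn).continuous

lemma sn_lower (hp : ∀ x, p x = 0 → x = 0) : ∃ c > 0, ∀ x, c * ‖x‖ ≤ p x := by
  by_cases hn : Nonempty (Fin n)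
  · obtain ⟨x0, hx0, hmin⟩ := (isCompact_sphere (0 : Fin n → ℝ) 1).exists_isMinOn
      (NormedSpace.sphere_nonempty.2 zero_le_one) (sn_cont p).continuousOn
    have h0 : 0 < p x0 := by
      refine lt_of_le_of_ne (apply_nonneg p _) fun h => ?_
      have := hp x0 h.symm
      simp [this] at hx0
    refine ⟨p x0, h0, fun x => ?_⟩
    by_cases hx : x = 0
    · simp [hx]
    have hx' : 0 < ‖x‖ := norm_pos_iff.2 hx
    have h1 : p x0 ≤ p (‖x‖⁻¹ • x) := hmin (by
      simp [norm_smul, hx'.ne'])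
    rw [map_smul_eq_mul, norm_inv, norm_norm] at h1
    calc p x0 * ‖x‖ ≤ (‖x‖⁻¹ * p x) * ‖x‖ := by gcongr
      _ = p x := by field_simp
  · refine ⟨1, one_pos, fun x => ?_⟩
    have : x = 0 := by ext i; exact (hn ⟨i⟩).elim
    simp [this]

/-- The exponential integral of a seminorm. -/
noncomputable def I : ℝ≥0∞ := ∫⁻ x, ENNReal.ofReal (Real.exp (-p x))

lemma I_ne_zero : I p ≠ 0 := by
  intro h
  have := sn_cont p
  rw [I, lintegral_eq_zero_iff (by fun_prop)] at h
  have h2 : ∀ᵐ x : Fin n → ℝ, False := by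
    filter_upwards [h] with x hx
    simp at hx
    linarith [Real.exp_pos (-p x)]
  simp at h2
  exact NeZero.ne (volume : Measure (Fin n → ℝ)) h2

lemma I_ne_top (hp : ∀ x, p x = 0 → x = 0) : I p ≠ ⊤ := by
  obtain ⟨c, hc, h⟩ := sn_lower p hp
  refine ne_top_of_le_ne_top ?_ (lintegral_mono (g := fun t : Fin n → ℝ =>
    ENNReal.ofReal (Real.exp (-∑ i, (c / (n+1)) * |t i|))) fun x => ?_)
  · rw [lintegral_exp_sum (fun i => by positivity)]
    exact ENNReal.prod_ne_top (by simp)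
  · apply ENNReal.ofReal_le_ofReal
    apply Real.exp_le_exp.2
    apply neg_le_neg
    refine le_trans ?_ (h x)
    calc ∑ i, (c / (n+1)) * |x i| ≤ ∑ i : Fin n, (c / (n+1)) * ‖x‖ := by
          gcongr with i; exact norm_le_pi_norm x i
      _ = (n / (n+1)) * (c * ‖x‖) := by simp; ring
      _ ≤ 1 * (c * ‖x‖) := by
          gcongr
          rw [div_le_one (by positivity)]; linarith
      _ = _ := one_mul _

lemma I_scale {s : ℝ} (hs : 0 < s) :
    ∫⁻ x, ENNReal.ofReal (Real.exp (-(s * p x))) = ENNReal.ofReal (s⁻¹ ^ n) * I p := by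
  have h := Measure.map_addHaar_smul (volume : Measure (Fin n → ℝ)) hs.ne'
  have hc := sn_cont p
  have : ∫⁻ x, ENNReal.ofReal (Real.exp (-p x)) ∂(Measure.map (s • ·) volume) =
      ∫⁻ x, ENNReal.ofReal (Real.exp (-p (s • x))) :=
    lintegral_map (by fun_prop) (by fun_prop)
  rw [h, lintegral_smul_measure] at this
  simp only [map_smul_eq_mul, Real.norm_eq_abs, abs_of_pos hs] at this
  rw [← this, I]
  simp [abs_of_pos hs]

lemma I_moment (hp : ∀ x, p x = 0 → x = 0) :
    (n : ℝ≥0∞) * I p ≤ ∫⁻ x, ENNReal.ofReal (p x) * ENNReal.ofReal (Real.exp (-p x)) := by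
  have hc := sn_cont p
  set M := ∫⁻ x, ENNReal.ofReal (p x) * ENNReal.ofReal (Real.exp (-p x)) with hM
  by_cases hMt : M = ⊤
  · rw [hMt]; exact le_top
  have step : ∀ s : ℝ, 1 < s → I p ≤ ENNReal.ofReal (s⁻¹ ^ n) * I p + ENNReal.ofReal (s - 1) * M := by
    intro s hs
    rw [← I_scale p (by linarith), hM, ← lintegral_const_mul _ (by fun_prop),
      ← lintegral_add_left (by fun_prop), I]
    refine lintegral_mono fun x => ?_
    simp only
    rw [← ENNReal.ofReal_mul (apply_nonneg p x), ← ENNReal.ofReal_mul (by linarith),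
      ← ENNReal.ofReal_add (Real.exp_pos _).le
        (mul_nonneg (by linarith) (mul_nonneg (apply_nonneg p x) (Real.exp_pos _).le))]
    apply ENNReal.ofReal_le_ofReal
    have e : Real.exp (-(s * p x)) = Real.exp (-p x) * Real.exp (-((s - 1) * p x)) := by
      rw [← Real.exp_add]; ring_nf
    have := Real.add_one_le_exp (-((s - 1) * p x))
    have h0 := (Real.exp_pos (-p x))
    rw [e]
    nlinarith
  have hIt := I_ne_top p hp
  set i := (I p).toReal with hi
  set m := M.toReal with hm
  have eI : I p = ENNReal.ofReal i := (ENNReal.ofReal_toReal hIt).symm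
  have eM : M = ENNReal.ofReal m := (ENNReal.ofReal_toReal hMt).symm
  have hi0 : 0 ≤ i := ENNReal.toReal_nonneg
  have hm0 : 0 ≤ m := ENNReal.toReal_nonneg
  have step2 : ∀ r : ℝ, 0 < r → r < 1 → r * (∑ k ∈ Finset.range n, r ^ k) * i ≤ m := by
    intro r hr hr1
    have := step r⁻¹ (by rw [one_lt_inv₀ hr]; exact hr1)
    have hs1 : 0 ≤ r⁻¹ - 1 := by
      rw [sub_nonneg]; exact ((one_lt_inv₀ hr).2 hr1).le
    rw [eI, eM, inv_inv, ← ENNReal.ofReal_mul (by positivity), ← ENNReal.ofReal_mul hs1,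
      ← ENNReal.ofReal_add (by positivity) (mul_nonneg hs1 hm0),
      ENNReal.ofReal_le_ofReal_iff (add_nonneg (by positivity) (mul_nonneg hs1 hm0))] at this
    have g := geom_sum_mul r n
    have h3 : (1 - r) * (r * (∑ k ∈ Finset.range n, r ^ k) * i) ≤ (1 - r) * m := by
      calc (1 - r) * (r * (∑ k ∈ Finset.range n, r ^ k) * i)
          = r * i * (1 - r ^ n) := by linear_combination -r * i * g
        _ = r * (i - r ^ n * i) := by ring
        _ ≤ r * ((r⁻¹ - 1) * m) := by gcongr; linarith
        _ = (1 - r) * m := by field_simp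
    exact le_of_mul_le_mul_left h3 (by linarith)
  have lim : Filter.Tendsto (fun r : ℝ => r * (∑ k ∈ Finset.range n, r ^ k) * i)
      (nhdsWithin 1 (Set.Iio 1)) (nhds (n * i)) := by
    have : Continuous (fun r : ℝ => r * (∑ k ∈ Finset.range n, r ^ k) * i) := by fun_prop
    have h := this.tendsto 1
    simp only [one_pow, Finset.sum_const, Finset.card_range, nsmul_eq_mul, mul_one, one_mul] at h
    exact h.mono_left nhdsWithin_le_nhds
  have fin : n * i ≤ m := by
    refine le_of_tendsto lim ?_
    filter_upwards [Ioo_mem_nhdsLT (show (0:ℝ) < 1 by norm_num)] with r hr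
    exact step2 r hr.1 hr.2
  rw [eI, eM, ← ENNReal.ofReal_natCast, ← ENNReal.ofReal_mul (by positivity)]
  exact ENNReal.ofReal_le_ofReal fin

lemma LC_exp {E : Type*} [AddCommGroup E] [Module ℝ E] (L : E →ₗ[ℝ] (Fin n → ℝ)) :
    LC fun x => ENNReal.ofReal (Real.exp (-p (L x))) := by
  intro a b ha hb hab x y
  rw [ENNReal.ofReal_rpow_of_pos (Real.exp_pos _), ENNReal.ofReal_rpow_of_pos (Real.exp_pos _),
    ← ENNReal.ofReal_mul (by positivity), ← Real.exp_mul, ← Real.exp_mul, ← Real.exp_add]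
  apply ENNReal.ofReal_le_ofReal
  apply Real.exp_le_exp.2
  have := p.add_le' (a • L x) (b • L y)
  have h1 := map_smul_eq_mul p a (L x)
  have h2 := map_smul_eq_mul p b (L y)
  rw [Real.norm_eq_abs, abs_of_pos ha] at h1
  rw [Real.norm_eq_abs, abs_of_pos hb] at h2
  simp only [map_add, map_smul]
  have h3 := map_add_le_add p (a • L x) (b • L y)
  linarith

end norm
end PLR

namespace PLR
open Pointwise ENNReal

/-- The affine-linear parametrization adapted to the hyperplane orthogonal to `u`. -/
noncomputable def Phi {n : ℕ} (u : Fin (n + 1) → ℝ) (i : Fin (n + 1)) :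
    (ℝ × (Fin n → ℝ)) →ₗ[ℝ] (Fin (n + 1) → ℝ) where
  toFun q := i.insertNth ((q.1 - ∑ j, q.2 j * u (i.succAbove j)) / u i) q.2
  map_add' q q' := by
    ext k
    rcases Fin.eq_self_or_eq_succAbove i k with rfl | ⟨j, rfl⟩
    · simp [add_mul, Finset.sum_add_distrib]; ring
    · simp
  map_smul' c q := by
    ext k
    rcases Fin.eq_self_or_eq_succAbove i k with rfl | ⟨j, rfl⟩
    · simp [mul_assoc, ← Finset.mul_sum]; ring
    · simp

lemma Phi_same {n : ℕ} (u : Fin (n + 1) → ℝ) (i : Fin (n + 1)) (q) :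
    Phi u i q i = (q.1 - ∑ j, q.2 j * u (i.succAbove j)) / u i := by simp [Phi]

lemma Phi_succAbove {n : ℕ} (u : Fin (n + 1) → ℝ) (i : Fin (n + 1)) (q) (j) :
    Phi u i q (i.succAbove j) = q.2 j := by simp [Phi]

lemma Phi_dot {n : ℕ} (u : Fin (n + 1) → ℝ) (i : Fin (n + 1)) (hi : u i ≠ 0) (q) :
    ∑ k, Phi u i q k * u k = q.1 := by
  rw [Fin.sum_univ_succAbove _ i]
  simp only [Phi_same, Phi_succAbove]
  field_simp; ring

lemma lintegral_affine {H : ℝ → ℝ≥0∞} (hH : Measurable H) (c : ℝ) {a : ℝ} (ha : a ≠ 0) :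
    ∫⁻ t, H ((t - c) / a) = ENNReal.ofReal |a| * ∫⁻ t, H t := by
  rw [lintegral_sub_right_eq_self (fun t => H (t / a)) c]
  have h := Real.map_volume_mul_left (inv_ne_zero ha)
  have : ∫⁻ t, H t ∂(Measure.map (a⁻¹ * ·) volume) = ∫⁻ t, H (a⁻¹ * t) :=
    lintegral_map hH (by fun_prop)
  rw [h, lintegral_smul_measure, inv_inv] at this
  simp only [div_eq_inv_mul]
  rw [← this]; rfl

lemma Phi_lintegral {n : ℕ} (u : Fin (n + 1) → ℝ) (i : Fin (n + 1)) (hi : u i ≠ 0)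
    {H : (Fin (n + 1) → ℝ) → ℝ≥0∞} (hH : Measurable H) :
    ∫⁻ t : ℝ, ∫⁻ v : Fin n → ℝ, H (Phi u i (t, v)) = ENNReal.ofReal |u i| * ∫⁻ x, H x := by
  have mPhi : Measurable (Phi u i) := (Phi u i).continuous_of_finiteDimensional.measurable
  rw [lintegral_lintegral_swap (by fun_prop), volume_pi (α := fun _ : Fin (n+1) => ℝ),
    lintegral_pi_succ' volume i hH]
  have mins : Measurable fun q : ℝ × (Fin n → ℝ) => (i.insertNth q.1 q.2 : Fin (n+1) → ℝ) :=
    (MeasurableEquiv.piFinSuccAbove (fun _ : Fin (n+1) => ℝ) i).symm.measurable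
  have m2 : Measurable fun v : Fin n → ℝ => ∫⁻ t : ℝ, H (i.insertNth t v) :=
    Measurable.lintegral_prod_left' (f := fun q : ℝ × (Fin n → ℝ) => H (i.insertNth q.1 q.2))
      (hH.comp mins)
  rw [← lintegral_const_mul _ m2, volume_pi]
  congr 1; ext v
  exact lintegral_affine (H := fun s => H (i.insertNth s v))
    (hH.comp (mins.comp (by fun_prop : Measurable fun s : ℝ => (s, v))))
    (∑ j, v j * u (i.succAbove j)) hi

/-- Key one-direction estimate. -/
lemma key_dir {n : ℕ} (p : Seminorm ℝ (Fin (n + 1) → ℝ))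
    (u : Fin (n + 1) → ℝ) (i : Fin (n + 1)) (hi : u i ≠ 0) :
    2 * ((∫⁻ v : Fin n → ℝ, ENNReal.ofReal (Real.exp (-p (Phi u i (0, v))))) *
      ∫⁻ x, ENNReal.ofReal |∑ k, x k * u k| * ENNReal.ofReal (Real.exp (-p x))) ≤
      ENNReal.ofReal |u i| * I p ^ 2 := by
  have hc := sn_cont p
  have mPhi : Measurable (Phi u i) := (Phi u i).continuous_of_finiteDimensional.measurable
  set g : ℝ → ℝ≥0∞ := fun t => ∫⁻ v : Fin n → ℝ, ENNReal.ofReal (Real.exp (-p (Phi u i (t, v))))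
    with hg
  have mG : Measurable fun q : ℝ × (Fin n → ℝ) => ENNReal.ofReal (Real.exp (-p (Phi u i q))) := by
    fun_prop
  have hLC : LC g := LC.marginal n mG (LC_exp p (Phi u i))
  have mg : Measurable g := mG.lintegral_prod_right'
  have even : ∀ t, g (-t) = g t := by
    intro t
    simp only [hg]
    rw [← lintegral_neg_eq_self]
    congr 1; ext v
    have : ((-t, -v) : ℝ × (Fin n → ℝ)) = -(t, v) := rfl
    rw [this, map_neg, map_neg_eq_map]
  have h := hLC.moment mg even
  have e1 : ∫⁻ t, g t = ENNReal.ofReal |u i| * I p :=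
    Phi_lintegral u i hi (H := fun x => ENNReal.ofReal (Real.exp (-p x))) (by fun_prop)
  have e2 : ∫⁻ t, ENNReal.ofReal |t| * g t = ENNReal.ofReal |u i| *
      ∫⁻ x, ENNReal.ofReal |∑ k, x k * u k| * ENNReal.ofReal (Real.exp (-p x)) := by
    rw [← Phi_lintegral u i hi (by fun_prop)]
    congr 1; ext t
    rw [hg, ← lintegral_const_mul _ (by fun_prop)]
    simp only [Phi_dot u i hi]
  rw [e1, e2] at h
  have ha0 : ENNReal.ofReal |u i| ≠ 0 := by simpa using hi
  refine (ENNReal.mul_le_mul_iff_right ha0 ENNReal.ofReal_ne_top).1 ?_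
  calc _ = 2 * (g 0 * (ENNReal.ofReal |u i| *
      ∫⁻ x, ENNReal.ofReal |∑ k, x k * u k| * ENNReal.ofReal (Real.exp (-p x)))) := by ring
    _ ≤ _ := h
    _ = _ := by ring

lemma det_step {n : ℕ} (A : Matrix (Fin (n + 1)) (Fin (n + 1)) ℝ) (i : Fin (n + 1))
    (hi : A i 0 ≠ 0) :
    |A.det| = |A i 0| * |(Matrix.of fun l m : Fin n => A (i.succAbove l) m.succ -
      A (i.succAbove l) 0 / A i 0 * A i m.succ).det| := by
  set B : Matrix (Fin (n + 1)) (Fin (n + 1)) ℝ := Matrix.of fun l m =>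
    A l m + (if l = i then 0 else -(A l 0 / A i 0)) * A i m with hB
  have h1 : B.det = A.det := Matrix.det_eq_of_forall_row_eq_smul_add_const
    (fun l => if l = i then 0 else -(A l 0 / A i 0)) i (by simp) (fun l m => rfl)
  rw [← h1, Matrix.det_succ_column_zero, Finset.sum_eq_single i]
  · rw [abs_mul, abs_mul]
    congr 1
    · simp [hB]
    · congr 2
      ext l m
      simp [hB, Fin.succAbove_ne]
      ring
  · intro l _ hl
    have : B l 0 = 0 := by
      simp [hB, hl]; field_simp; ring
    rw [this]; simp
  · simp

/-- The seminorm `ξ ↦ ‖∑ ξ_n F_n‖₁`. -/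
noncomputable def snF {X : Type*} [MeasurableSpace X] (ν : Measure X) {n : ℕ}
    (F : Fin n → X → ℝ) (hF : ∀ n, Integrable (F n) ν) : Seminorm ℝ (Fin n → ℝ) :=
  Seminorm.of (fun ξ => ∫ x, |∑ k, ξ k * F k x| ∂ν)
    (by
      intro ξ η
      have h : ∀ ξ : Fin n → ℝ, Integrable (fun x => |∑ k, ξ k * F k x|) ν := fun ξ =>
        (integrable_finsetSum _ fun k _ => (hF k).const_mul _).abs
      rw [← integral_add (h ξ) (h η)]
      refine integral_mono (h _) ((h _).add (h _)) fun x => ?_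
      simp only [Pi.add_apply, add_mul, Finset.sum_add_distrib]
      exact abs_add_le _ _)
    (by
      intro a ξ
      rw [← integral_const_mul]
      congr 1; ext x
      simp only [Pi.smul_apply, smul_eq_mul, mul_assoc, ← Finset.mul_sum, abs_mul,
        Real.norm_eq_abs])

lemma snF_apply {X : Type*} [MeasurableSpace X] (ν : Measure X) {n : ℕ}
    (F : Fin n → X → ℝ) (hF : ∀ n, Integrable (F n) ν) (ξ) :
    snF ν F hF ξ = ∫ x, |∑ k, ξ k * F k x| ∂ν := rfl

theorem reisner {X : Type*} [MeasurableSpace X] (ν : Measure X) [SigmaFinite ν] (n : ℕ) :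
    ∀ (F : Fin n → X → ℝ) (_ : ∀ i, Measurable (F i)) (hF : ∀ i, Integrable (F i) ν)
      (_ : ∀ ξ, snF ν F hF ξ = 0 → ξ = 0),
      (2 ^ n * n.factorial : ℝ≥0∞) ≤ I (snF ν F hF) *
        ∫⁻ x : Fin n → X, ENNReal.ofReal |Matrix.det (Matrix.of fun l m => F l (x m))|
          ∂(Measure.pi fun _ => ν) := by
  induction n with
  | zero =>
    intro F mF hF hp
    have : ∀ ξ, snF ν F hF ξ = 0 := by intro ξ; simp [snF_apply]
    simp [I, this, Measure.volume_pi_eq_dirac (0 : Fin 0 → ℝ)]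
  | succ n ih =>
    intro F mF hF hp
    set p := snF ν F hF with hpdef
    have hc := sn_cont p
    set D : X → ℝ≥0∞ := fun x => ∫⁻ y : Fin n → X,
      ENNReal.ofReal |Matrix.det (Matrix.of fun l m => F l ((Fin.insertNth 0 x y : Fin (n+1) → X) m))|
          ∂(Measure.pi fun _ => ν) with hD
    set M : X → ℝ≥0∞ := fun x => ∫⁻ ξ : Fin (n+1) → ℝ, ENNReal.ofReal |∑ k, ξ k * F k x| *
      ENNReal.ofReal (Real.exp (-p ξ)) with hM
    have mdet : Measurable fun x : Fin (n+1) → X =>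
        ENNReal.ofReal |Matrix.det (Matrix.of fun l m => F l (x m))| := by
      simp only [Matrix.det_apply, Matrix.of_apply]
      fun_prop
    have ptw : ∀ x, 2 * (2 ^ n * n.factorial) * M x ≤ D x * I p ^ 2 := by
      intro x
      by_cases hx : ∀ k, F k x = 0
      · simp [hM, hx]
      push Not at hx
      obtain ⟨i, hi⟩ := hx
      set u : Fin (n+1) → ℝ := fun k => F k x with hu
      have kd := key_dir p u i hi
      set F' : Fin n → X → ℝ := fun j y => F (i.succAbove j) y - u (i.succAbove j) / u i * F i y
        with hF'
      have iF' : ∀ j, Integrable (F' j) ν := fun j => (hF _).sub ((hF i).const_mul _)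
      have mF' : ∀ j, Measurable (F' j) := fun j => by fun_prop
      have pF' : ∀ v, snF ν F' iF' v = p (Phi u i (0, v)) := by
        intro v
        rw [hpdef, snF_apply, snF_apply]
        congr 1; ext y
        congr 1
        rw [Fin.sum_univ_succAbove _ i]
        simp only [Phi_same, Phi_succAbove, hF', mul_sub, Finset.sum_sub_distrib]
        rw [zero_sub, neg_div, neg_mul, Finset.sum_div, Finset.sum_mul]
        rw [neg_add_eq_sub]
        congr 1
        exact Finset.sum_congr rfl fun j _ => by ring
      have h2 := ih F' mF' iF' (by
        intro v hv
        rw [pF'] at hv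
        have := hp _ hv
        ext j
        have h3 := Phi_succAbove u i (0, v) j
        rw [this] at h3
        exact h3.symm)
      have eD : D x = ENNReal.ofReal |u i| * ∫⁻ y : Fin n → X,
          ENNReal.ofReal |Matrix.det (Matrix.of fun l m => F' l (y m))|
            ∂(Measure.pi fun _ => ν) := by
        rw [← lintegral_const_mul' _ _ ENNReal.ofReal_ne_top]
        refine lintegral_congr fun y => ?_
        rw [← ENNReal.ofReal_mul (abs_nonneg _), det_step _ i]
        · simp [hF', hu]
        · simpa using hi
      have eI : I (snF ν F' iF') = ∫⁻ v : Fin n → ℝ,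
          ENNReal.ofReal (Real.exp (-p (Phi u i (0, v)))) := by
        simp only [I, pF']
      rw [eI] at h2
      rw [eD]
      set J := ∫⁻ v : Fin n → ℝ, ENNReal.ofReal (Real.exp (-p (Phi u i (0, v))))
      set D' := ∫⁻ y : Fin n → X,
          ENNReal.ofReal |Matrix.det (Matrix.of fun l m => F' l (y m))|
            ∂(Measure.pi fun _ => ν)
      calc 2 * (2 ^ n * n.factorial) * M x ≤ 2 * (J * D') * M x := by gcongr
        _ = D' * (2 * (J * M x)) := by ring
        _ ≤ D' * (ENNReal.ofReal |u i| * I p ^ 2) := by gcongr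
        _ = _ := by ring
    have mM2 : Measurable fun q : X × (Fin (n+1) → ℝ) => ENNReal.ofReal |∑ k, q.2 k * F k q.1| *
      ENNReal.ofReal (Real.exp (-p q.2)) := by fun_prop
    have mM : Measurable M := mM2.lintegral_prod_right'
    have eM : ((n + 1 : ℕ) : ℝ≥0∞) * I p ≤ ∫⁻ x, M x ∂ν := by
      refine (I_moment p hp).trans (le_of_eq ?_)
      rw [hM, lintegral_lintegral_swap mM2.aemeasurable]
      congr 1; ext ξ
      rw [lintegral_mul_const _ (by fun_prop), hpdef, snF_apply,
        ofReal_integral_eq_lintegral_ofReal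
          (integrable_finsetSum _ fun k _ => (hF k).const_mul _).abs
          (Filter.Eventually.of_forall fun _ => abs_nonneg _)]
    have eD : ∫⁻ x, D x ∂ν = ∫⁻ x : Fin (n+1) → X,
        ENNReal.ofReal |Matrix.det (Matrix.of fun l m => F l (x m))|
          ∂(Measure.pi fun _ => ν) := (lintegral_pi_succ ν 0 mdet).symm
    rw [← eD]
    have hI0 := I_ne_zero p
    have hIt := I_ne_top p hp
    have tot : 2 * (2 ^ n * n.factorial) * (((n + 1 : ℕ) : ℝ≥0∞) * I p) ≤
        (∫⁻ x, D x ∂ν) * I p ^ 2 := by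
      calc _ ≤ 2 * (2 ^ n * n.factorial) * ∫⁻ x, M x ∂ν := by gcongr
        _ = ∫⁻ x, 2 * (2 ^ n * n.factorial) * M x ∂ν := by rw [lintegral_const_mul _ mM]
        _ ≤ ∫⁻ x, D x * I p ^ 2 ∂ν := lintegral_mono ptw
        _ = _ := lintegral_mul_const' _ _ (ENNReal.pow_ne_top hIt)
    refine (ENNReal.mul_le_mul_iff_right hI0 hIt).1 ?_
    calc _ = 2 * (2 ^ n * n.factorial) * (((n + 1 : ℕ) : ℝ≥0∞) * I p) := by
          rw [Nat.factorial_succ]; push_cast; ring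
      _ ≤ _ := tot
      _ = _ := by ring

end PLR

namespace PLR
open Pointwise ENNReal

lemma squeeze {ι W : Type*} [Fintype ι] [MeasurableSpace W] (μ : Measure W) [SigmaFinite μ]
    {A : Set ((ι → ℝ) × W)} (hA : MeasurableSet A)
    (ho : ∀ y, IsOpen {x | (x, y) ∈ A}) (hcv : ∀ y, Convex ℝ {x | (x, y) ∈ A})
    {θ : ℝ} (h0 : 0 < θ) (h1 : θ ≤ 1) :
    ∃ A' : Set ((ι → ℝ) × W), MeasurableSet A' ∧ A' ⊆ A ∧
      (∀ y, IsOpen {x | (x, y) ∈ A'}) ∧ (∀ y, Convex ℝ {x | (x, y) ∈ A'}) ∧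
      (volume.prod μ) A' = ENNReal.ofReal (θ ^ Fintype.card ι) * (volume.prod μ) A ∧
      ∀ x x' y, (x, y) ∈ A' → (x', y) ∈ A' →
        ∃ z z', (z, y) ∈ A ∧ (z', y) ∈ A ∧ x - x' = θ • (z - z') := by
  classical
  set q := TopologicalSpace.denseSeq (ι → ℝ) with hq
  have ex : ∀ y : W, ∃ n : ℕ, (q n, y) ∈ A ∨ ∀ m, (q m, y) ∉ A := by
    intro y
    by_cases h : ∃ n, (q n, y) ∈ A
    · exact ⟨h.choose, Or.inl h.choose_spec⟩
    · push Not at h; exact ⟨0, Or.inr h⟩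
  set f : W → (ι → ℝ) := fun y => q (Nat.find (ex y)) with hf
  have mS : ∀ n, MeasurableSet {y : W | (q n, y) ∈ A} := fun n =>
    hA.preimage (by fun_prop : Measurable fun y : W => (q n, y))
  have mf : Measurable f := by
    refine Measurable.find (f := fun n (_ : W) => q n) (fun n => measurable_const) (fun n => ?_) ex
    refine (mS n).union ?_
    have : {y : W | ∀ m, (q m, y) ∉ A} = ⋂ m, {y | (q m, y) ∈ A}ᶜ := by ext; simp
    change MeasurableSet {y : W | ∀ m, (q m, y) ∉ A}
    rw [this]
    exact MeasurableSet.iInter fun m => (mS m).compl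
  have fmem : ∀ x y, (x, y) ∈ A → (f y, y) ∈ A := by
    intro x y hxy
    obtain ⟨z, hz, m, rfl⟩ := (TopologicalSpace.denseRange_denseSeq (ι → ℝ)).inter_open_nonempty _
      (ho y) ⟨x, hxy⟩
    rcases Nat.find_spec (ex y) with h | h
    · exact h
    · exact absurd hz (h m)
  set A' : Set ((ι → ℝ) × W) := {r | (θ⁻¹ • (r.1 - (1 - θ) • f r.2), r.2) ∈ A} with hA'
  have aff : ∀ y : W, ∀ x : ι → ℝ, x = θ • (θ⁻¹ • (x - (1 - θ) • f y)) + (1 - θ) • f y := by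
    intro y x
    rw [smul_smul, mul_inv_cancel₀ h0.ne', one_smul, sub_add_cancel]
  have mA' : MeasurableSet A' := hA.preimage (by fun_prop)
  refine ⟨A', mA', ?_, ?_, ?_, ?_, ?_⟩
  · rintro ⟨x, y⟩ hxy
    have hxy : (θ⁻¹ • (x - (1 - θ) • f y), y) ∈ A := hxy
    have := hcv y hxy (fmem _ _ hxy) h0.le (sub_nonneg.2 h1) (by ring)
    rw [← aff y x] at this
    exact this
  · intro y
    exact (ho y).preimage (f := fun x => θ⁻¹ • (x - (1 - θ) • f y)) (by fun_prop)
  · intro y x hx x' hx' a b ha hb hab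
    have := hcv y hx hx' ha hb hab
    show (θ⁻¹ • (a • x + b • x' - (1 - θ) • f y), y) ∈ A
    have e : θ⁻¹ • (a • x + b • x' - (1 - θ) • f y) = a • θ⁻¹ • (x - (1 - θ) • f y) +
        b • θ⁻¹ • (x' - (1 - θ) • f y) := by
      obtain rfl : b = 1 - a := by linarith
      module
    rw [e]; exact this
  · rw [Measure.prod_apply_symm mA', Measure.prod_apply_symm hA,
      ← lintegral_const_mul' _ _ ENNReal.ofReal_ne_top]
    refine lintegral_congr fun y => ?_
    have e : (fun x => (x, y)) ⁻¹' A' = (fun x => x - (1 - θ) • f y) ⁻¹'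
        ((fun x => θ⁻¹ • x) ⁻¹' ((fun x => (x, y)) ⁻¹' A)) := rfl
    rw [e]
    simp only [sub_eq_add_neg]
    rw [measure_preimage_add_right, Measure.addHaar_preimage_smul _ (inv_ne_zero h0.ne')]
    congr 2
    simp [abs_of_pos h0]
  · intro x x' y hx hx'
    refine ⟨_, _, hx, hx', ?_⟩
    simp only
    rw [← smul_sub, smul_smul, mul_inv_cancel₀ h0.ne', one_smul]
    abel

/-- All slices along the first `m` coordinates are open and convex. -/
def Slc {N : ℕ} (m : ℕ) (A : Set (Fin N → ℝ)) : Prop :=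
  ∀ c : Fin N → ℝ, ∃ U : Set (Fin N → ℝ), IsOpen U ∧ Convex ℝ U ∧
    ∀ x, (∀ i : Fin N, m ≤ i.val → x i = c i) → (x ∈ A ↔ x ∈ U)

lemma squeezeFin {N m : ℕ} (hm : m ≤ N) {A : Set (Fin N → ℝ)} (hA : MeasurableSet A)
    (hs : Slc m A) {θ : ℝ} (h0 : 0 < θ) (h1 : θ ≤ 1) :
    ∃ A' : Set (Fin N → ℝ), MeasurableSet A' ∧ A' ⊆ A ∧ Slc m A' ∧
      volume A' = ENNReal.ofReal (θ ^ m) * volume A ∧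
      ∀ x ∈ A', ∀ x' ∈ A', (∀ i : Fin N, m ≤ i.val → x i = x' i) →
        ∃ z ∈ A, ∃ z' ∈ A, (∀ i : Fin N, m ≤ i.val → z i = z' i) ∧ x - x' = θ • (z - z') := by
  set e := MeasurableEquiv.piEquivPiSubtypeProd (fun _ : Fin N => ℝ) (fun i => i.val < m) with he
  have mp := volume_preserving_piEquivPiSubtypeProd (fun _ : Fin N => ℝ) (fun i => i.val < m)
  have es1 : ∀ x y (i : Fin N) (h : i.val < m), e.symm (x, y) i = x ⟨i, h⟩ := by
    intro x y i h
    simp [he, MeasurableEquiv.piEquivPiSubtypeProd, Equiv.piEquivPiSubtypeProd, h]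
  have es2 : ∀ x y (i : Fin N) (h : ¬ i.val < m), e.symm (x, y) i = y ⟨i, h⟩ := by
    intro x y i h
    simp [he, MeasurableEquiv.piEquivPiSubtypeProd, Equiv.piEquivPiSubtypeProd, h]
  have e1 : ∀ x, (e x).1 = fun i : {i : Fin N // i.val < m} => x i.1 := fun x => rfl
  have e2 : ∀ x, (e x).2 = fun i : {i : Fin N // ¬ i.val < m} => x i.1 := fun x => rfl
  have cont : ∀ y, Continuous fun x => e.symm (x, y) := by
    intro y
    refine continuous_pi fun i => ?_
    by_cases h : i.val < m
    · simp only [es1 _ _ _ h]; fun_prop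
    · simp only [es2 _ _ _ h]; fun_prop
  have slice : ∀ y, ∃ U : Set (Fin N → ℝ), IsOpen U ∧ Convex ℝ U ∧
      {x | (x, y) ∈ e.symm ⁻¹' A} = (fun x => e.symm (x, y)) ⁻¹' U := by
    intro y
    obtain ⟨U, hU, hUc, h⟩ := hs (e.symm (0, y))
    refine ⟨U, hU, hUc, ?_⟩
    ext x
    refine h _ fun i hi => ?_
    rw [es2 _ _ _ (not_lt.2 hi), es2 _ _ _ (not_lt.2 hi)]
  obtain ⟨B, mB, hBA, hBo, hBc, hBv, hBd⟩ := squeeze volume (A := e.symm ⁻¹' A)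
    (hA.preimage e.symm.measurable)
    (by
      intro y
      obtain ⟨U, hU, hUc, h⟩ := slice y
      rw [h]; exact hU.preimage (cont y))
    (by
      intro y
      obtain ⟨U, hU, hUc, h⟩ := slice y
      rw [h]
      intro x hx x' hx' a b ha hb hab
      have := hUc hx hx' ha hb hab
      show e.symm (a • x + b • x', y) ∈ U
      convert this using 1
      ext i
      by_cases h : i.val < m
      · simp [es1 _ _ _ h]
      · simp only [es2 _ _ _ h, Pi.add_apply, Pi.smul_apply, smul_eq_mul]
        rw [← add_mul, hab, one_mul]) h0 h1
  have card : Fintype.card {i : Fin N // i.val < m} = m := by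
    rw [Fintype.card_subtype]
    have := Fin.card_filter_val_lt (n := N) (m := m)
    simp [this, hm]
  refine ⟨e ⁻¹' B, mB.preimage e.measurable, ?_, ?_, ?_, ?_⟩
  · intro x hx
    have := hBA hx
    simpa using this
  · intro c
    refine ⟨(fun x : Fin N → ℝ => fun i : {i : Fin N // i.val < m} => x i) ⁻¹'
      {x | (x, (e c).2) ∈ B}, (hBo _).preimage (by fun_prop), ?_, ?_⟩
    · intro x hx x' hx' a b ha hb hab
      exact hBc (e c).2 hx hx' ha hb hab
    · intro x hx
      have : (e x).2 = (e c).2 := by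
        rw [e2, e2]; ext i; exact hx i (not_lt.1 i.2)
      show e x ∈ B ↔ ((e x).1, (e c).2) ∈ B
      rw [← this]
  · rw [mp.measure_preimage_equiv]
    rw [card] at hBv
    rw [Measure.volume_eq_prod, hBv, ← Measure.volume_eq_prod, mp.symm.measure_preimage_equiv]
  · intro x hx x' hx' hxx
    have : (e x').2 = (e x).2 := by
      rw [e2, e2]; ext i; exact (hxx i (not_lt.1 i.2)).symm
    have hx1 : ((e x).1, (e x).2) ∈ B := hx
    have hx2 : ((e x').1, (e x).2) ∈ B := by rw [← this]; exact hx'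
    obtain ⟨z, z', hz, hz', hd⟩ := hBd _ _ _ hx1 hx2
    refine ⟨_, hz, _, hz', ?_, ?_⟩
    · intro i hi
      rw [es2 _ _ _ (not_lt.2 hi), es2 _ _ _ (not_lt.2 hi)]
    · ext i
      by_cases h : i.val < m
      · have := congrFun hd ⟨i, h⟩
        simp only [Pi.sub_apply, Pi.smul_apply, es1 _ _ _ h]
        exact this
      · simp only [Pi.sub_apply, Pi.smul_apply, es2 _ _ _ h]
        rw [hxx i (not_lt.1 h)]; simp

lemma iter {N : ℕ} (q : Seminorm ℝ (Fin N → ℝ)) (l : ℕ → ℝ) (hl0 : ∀ i, 0 < l i)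
    (hl : Monotone l) (k : ℕ) : ∀ m, m + k = N →
    ∃ A : Set (Fin N → ℝ), MeasurableSet A ∧ Slc m A ∧
      volume A = ENNReal.ofReal (l (m - 1) ^ m * ∏ i ∈ Finset.Ico m N, l i) *
        volume {x | q x < 1 / 2} ∧
      ∀ j, m ≤ j → j ≤ N → ∀ x ∈ A, ∀ x' ∈ A, (∀ i : Fin N, j ≤ i.val → x i = x' i) →
        q (x - x') < l (j - 1) := by
  have hc := sn_cont q
  induction k with
  | zero =>
    intro m hm
    have hm : m = N := by omega
    subst hm
    set L := l (m - 1) with hL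
    have hLp : 0 < L := hl0 _
    have op : IsOpen {x | q x < L / 2} := isOpen_lt hc continuous_const
    refine ⟨{x | q x < L / 2}, op.measurableSet, ?_, ?_, ?_⟩
    · intro c
      refine ⟨_, op, ?_, fun x _ => Iff.rfl⟩
      have := q.convexOn.convex_lt (L / 2)
      simpa using this
    · have : {x | q x < L / 2} = L • {x | q x < 1 / 2} := by
        ext x
        rw [Set.mem_smul_set_iff_inv_smul_mem₀ hLp.ne']
        simp only [Set.mem_ofPred_eq, map_smul_eq_mul, norm_inv, Real.norm_eq_abs, abs_of_pos hLp]
        rw [inv_mul_lt_iff₀ hLp]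
        ring_nf
      rw [this, Measure.addHaar_smul]
      simp [abs_of_pos hLp]
    · intro j hj hj' x hx x' hx' _
      have : j = m := le_antisymm hj' hj
      subst this
      have hx : q x < L / 2 := hx
      have hx' : q x' < L / 2 := hx'
      have := map_sub_le_add q x x'
      linarith
  | succ k ih =>
    intro m hm
    obtain ⟨A, mA, sA, vA, dA⟩ := ih (m + 1) (by omega)
    have sA' : Slc m A := by
      intro c
      obtain ⟨U, h1, h2, h3⟩ := sA c
      exact ⟨U, h1, h2, fun x hx => h3 x fun i hi => hx i (by omega)⟩
    have hθ : 0 < l (m - 1) / l m := div_pos (hl0 _) (hl0 _)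
    have hθ1 : l (m - 1) / l m ≤ 1 := (div_le_one (hl0 _)).2 (hl (by omega))
    obtain ⟨A', mA', hsub, sA'', vA', dA'⟩ := squeezeFin (by omega : m ≤ N) mA sA' hθ hθ1
    refine ⟨A', mA', sA'', ?_, ?_⟩
    · rw [vA', vA, ← mul_assoc, ← ENNReal.ofReal_mul (by positivity)]
      congr 2
      rw [Finset.prod_eq_prod_Ico_succ_bot (by omega : m < N)]
      have := (hl0 m).ne'
      simp only [Nat.add_sub_cancel, div_pow]
      field_simp
      try ring
    · intro j hj hjN x hx x' hx' hxx
      rcases hj.eq_or_lt with rfl | hj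
      · obtain ⟨z, hz, z', hz', hzz, hd⟩ := dA' x hx x' hx' hxx
        have h := dA (m + 1) le_rfl (by omega) z hz z' hz' fun i hi => hzz i (by omega)
        rw [Nat.add_sub_cancel] at h
        rw [hd, map_smul_eq_mul, Real.norm_eq_abs, abs_of_pos hθ]
        calc l (m - 1) / l m * q (z - z') < l (m - 1) / l m * l m := by gcongr
          _ = _ := div_mul_cancel₀ _ (hl0 m).ne'
      · exact dA j hj hjN x (hsub hx) x' (hsub hx') hxx

end PLR

namespace PLR
open Pointwise ENNReal

/-- Cast of an integer vector to a real vector. -/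
def zc {N : ℕ} (z : Fin N → ℤ) : Fin N → ℝ := fun i => (z i : ℝ)

lemma exmin {N : ℕ} (p : Seminorm ℝ (Fin N → ℝ)) (hp : ∀ x, p x = 0 → x = 0)
    (S : Set (Fin N → ℤ)) (hS : S.Nonempty) : ∃ z ∈ S, ∀ w ∈ S, p (zc z) ≤ p (zc w) := by
  obtain ⟨c, hc, hcl⟩ := sn_lower p hp
  obtain ⟨w0, hw0⟩ := hS
  set R := p (zc w0) with hR
  set T : Set (Fin N → ℤ) := {z | z ∈ S ∧ p (zc z) ≤ R} with hT
  have fin : T.Finite := by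
    refine (Set.finite_Icc (fun _ => -⌈R / c⌉ : Fin N → ℤ) (fun _ => ⌈R / c⌉)).subset ?_
    rintro z ⟨_, hz⟩
    have h : ∀ i, |z i| ≤ ⌈R / c⌉ := by
      intro i
      have h1 : |(z i : ℝ)| ≤ R / c := by
        rw [le_div_iff₀ hc]
        have h2 : ‖zc z i‖ ≤ ‖zc z‖ := norm_le_pi_norm _ i
        have h3 := hcl (zc z)
        have h4 : |(z i : ℝ)| ≤ ‖zc z‖ := h2
        nlinarith
      have := h1.trans (Int.le_ceil _)
      exact_mod_cast this
    exact ⟨fun i => (abs_le.1 (h i)).1, fun i => (abs_le.1 (h i)).2⟩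
  obtain ⟨z, hz, hmin⟩ := Set.exists_min_image T (fun z => p (zc z)) fin ⟨w0, hw0, le_rfl⟩
  refine ⟨z, hz.1, fun w hw => ?_⟩
  by_cases h : p (zc w) ≤ R
  · exact hmin w ⟨hw, h⟩
  · exact hz.2.trans (not_le.1 h).le

lemma exseq {N : ℕ} (p : Seminorm ℝ (Fin N → ℝ)) (hp : ∀ x, p x = 0 → x = 0) (k : ℕ) :
    k ≤ N → ∃ b : ℕ → (Fin N → ℤ), LinearIndependent ℝ (fun i : Fin k => zc (b i)) ∧
      ∀ j < k, ∀ z, zc z ∉ Submodule.span ℝ ((fun i => zc (b i)) '' Set.Iio j) →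
        p (zc (b j)) ≤ p (zc z) := by
  induction k with
  | zero => exact fun _ => ⟨fun _ => 0, linearIndependent_empty_type, by simp⟩
  | succ k ih =>
    intro hk
    obtain ⟨b, hli, hmin⟩ := ih (by omega)
    have hne : {z : Fin N → ℤ | zc z ∉ Submodule.span ℝ ((fun i => zc (b i)) '' Set.Iio k)}.Nonempty := by
      by_contra hcon
      rw [Set.not_nonempty_iff_eq_empty, Set.eq_empty_iff_forall_notMem] at hcon
      have hall : ∀ z : Fin N → ℤ, zc z ∈ Submodule.span ℝ ((fun i => zc (b i)) '' Set.Iio k) :=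
        fun z => not_not.1 (hcon z)
      have htop : (⊤ : Submodule ℝ (Fin N → ℝ)) ≤
          Submodule.span ℝ ((fun i => zc (b i)) '' Set.Iio k) := by
        rw [← (Pi.basisFun ℝ (Fin N)).span_eq, Submodule.span_le]
        rintro _ ⟨i, rfl⟩
        have := hall (Pi.single i 1)
        have e : (Pi.basisFun ℝ (Fin N)) i = zc (Pi.single i 1) := by
          ext j
          by_cases h : j = i <;> simp [zc, h]
        rw [e]; exact this
      have hr : (fun i => zc (b i)) '' Set.Iio k = Set.range (fun i : Fin k => zc (b i)) := by
        ext x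
        constructor
        · rintro ⟨i, hi, rfl⟩; exact ⟨⟨i, hi⟩, rfl⟩
        · rintro ⟨i, rfl⟩; exact ⟨i, i.2, rfl⟩
      rw [hr, top_le_iff] at htop
      have h1 := finrank_range_le_card (R := ℝ) (fun i : Fin k => zc (b i))
      rw [Set.finrank, htop, finrank_top] at h1
      simp at h1
      omega
    obtain ⟨z, hz, hzm⟩ := exmin p hp _ hne
    have hup : ∀ i, i ≠ k → Function.update b k z i = b i := fun i hi =>
      Function.update_of_ne hi _ _
    have him : ∀ j ≤ k, (fun i => zc (Function.update b k z i)) '' Set.Iio j =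
        (fun i => zc (b i)) '' Set.Iio j := by
      intro j hj
      refine Set.image_congr fun i hi => ?_
      have : i < j := hi
      rw [hup i (by omega)]
    refine ⟨Function.update b k z, ?_, ?_⟩
    · have e : (fun i : Fin (k + 1) => zc (Function.update b k z i)) =
          Fin.snoc (α := fun _ => Fin N → ℝ) (fun i : Fin k => zc (b i)) (zc z) := by
        funext i
        refine Fin.lastCases ?_ (fun i => ?_) i
        · simp
        · rw [Fin.snoc_castSucc]
          rw [hup _ (by simpa using i.2.ne)]
          rfl
      rw [e, linearIndependent_finSnoc]
      refine ⟨hli, ?_⟩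
      have hr : (fun i => zc (b i)) '' Set.Iio k = Set.range (fun i : Fin k => zc (b i)) := by
        ext x
        constructor
        · rintro ⟨i, hi, rfl⟩; exact ⟨⟨i, hi⟩, rfl⟩
        · rintro ⟨i, rfl⟩; exact ⟨i, i.2, rfl⟩
      rw [← hr]; exact hz
    · intro j hj w hw
      rw [him j (by omega)] at hw
      rcases (Nat.lt_succ_iff.1 hj).eq_or_lt with rfl | hj
      · rw [Function.update_self]; exact hzm w hw
      · rw [hup j hj.ne]; exact hmin j hj w hw

lemma I_vol {N : ℕ} (p : Seminorm ℝ (Fin N → ℝ)) (hp : ∀ x, p x = 0 → x = 0) :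
    I p = N.factorial * volume {x | p x < 1} := by
  rw [measure_lt_one_eq_integral_div_gamma (g := p) volume (map_zero p) (fun x => map_neg_eq_map p x)
    (fun x y => map_add_le_add p x y) (fun {x} h => hp x h) (fun r x => (map_smul_eq_mul p r x).le) (zero_lt_one)]
  simp only [Real.rpow_one, div_one, Module.finrank_fin_fun, Real.Gamma_nat_eq_factorial]
  rw [ENNReal.ofReal_div_of_pos (by positivity), integral_eq_lintegral_of_nonneg_ae]
  · change I p = _ * (ENNReal.ofReal (I p).toReal / _)
    rw [ENNReal.ofReal_toReal (I_ne_top p hp), ENNReal.ofReal_natCast, ENNReal.mul_div_cancel]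
    · simp [Nat.factorial_ne_zero]
    · simp
  · exact Filter.Eventually.of_forall fun x => (Real.exp_pos _).le
  · exact (Real.continuous_exp.comp (sn_cont p).neg).aestronglyMeasurable

lemma I_comp {N : ℕ} (p : Seminorm ℝ (Fin N → ℝ)) (f : (Fin N → ℝ) →ₗ[ℝ] (Fin N → ℝ))
    (hf : LinearMap.det f ≠ 0) :
    I p = ENNReal.ofReal |LinearMap.det f| * I (p.comp f) := by
  have h := Measure.map_linearMap_addHaar_eq_smul_addHaar (volume : Measure (Fin N → ℝ)) hf
  have hc : Continuous f := f.continuous_of_finiteDimensional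
  have hm : Measurable fun x => ENNReal.ofReal (Real.exp (-p x)) :=
    (ENNReal.continuous_ofReal.comp (Real.continuous_exp.comp (sn_cont p).neg)).measurable
  have h2 : I (p.comp f) = ∫⁻ x, ENNReal.ofReal (Real.exp (-p x)) ∂(Measure.map f volume) := by
    rw [lintegral_map hm hc.measurable]; rfl
  rw [h2, h, lintegral_smul_measure, smul_eq_mul, ← mul_assoc, ← ENNReal.ofReal_mul (abs_nonneg _),
    ← abs_mul, mul_inv_cancel₀ hf]
  simp [I]

/-- `c ↦ ∑ c_i b_i`. -/
noncomputable def Bm {N : ℕ} (b : Fin N → Fin N → ℝ) : (Fin N → ℝ) →ₗ[ℝ] (Fin N → ℝ) :=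
  Fintype.linearCombination ℝ b

lemma Bm_apply {N : ℕ} (b : Fin N → Fin N → ℝ) (c) : Bm b c = ∑ i, c i • b i := rfl

lemma Bm_det {N : ℕ} (b : Fin N → Fin N → ℝ) : LinearMap.det (Bm b) = (Matrix.of b).det := by
  rw [← LinearMap.det_toMatrix', ← Matrix.det_transpose]
  congr 1
  ext i j
  simp [LinearMap.toMatrix'_apply, Bm_apply, Pi.single_apply, ite_apply]

lemma Bm_inj {N : ℕ} {b : Fin N → Fin N → ℝ} (h : LinearIndependent ℝ b) {c} (hc : Bm b c = 0) :
    c = 0 := funext (Fintype.linearIndependent_iff.1 h c hc)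

lemma Bm_det_ne {N : ℕ} (b : Fin N → Fin N → ℝ) (h : LinearIndependent ℝ b) :
    LinearMap.det (Bm b) ≠ 0 := by
  have : LinearMap.ker (Bm b) = ⊥ := LinearMap.ker_eq_bot'.2 fun c hc => Bm_inj h hc
  exact fun h0 => (LinearMap.bot_lt_ker_of_det_eq_zero (f := Bm b) h0).ne this.symm

lemma blich {N : ℕ} {b : Fin N → Fin N → ℝ} (h : LinearIndependent ℝ b)
    {A : Set (Fin N → ℝ)} (mA : MeasurableSet A)
    (hA : ∀ u ∈ A, ∀ v ∈ A, ∀ z : Fin N → ℤ, Bm b (u - v) = zc z → u - v = 0) :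
    ENNReal.ofReal |LinearMap.det (Bm b)| * volume A ≤ 1 := by
  by_contra hcon
  rw [not_le, ← Measure.addHaar_image_linearMap] at hcon
  have fd := ZSpan.isAddFundamentalDomain' (Pi.basisFun ℝ (Fin N)) volume
  have v1 : volume (ZSpan.fundamentalDomain (Pi.basisFun ℝ (Fin N))) = 1 := by
    rw [ZSpan.fundamentalDomain_pi_basisFun, volume_pi, Measure.pi_pi]
    simp
  have mBA : MeasurableSet (Bm b '' A) := by
    set e := LinearMap.equivOfDetNeZero (Bm b) (Bm_det_ne b h)
    have : Bm b '' A = e.symm ⁻¹' A := by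
      rw [← LinearEquiv.image_eq_preimage_symm]; rfl
    rw [this]
    exact mA.preimage (LinearMap.continuous_of_finiteDimensional e.symm.toLinearMap).measurable
  rw [← v1] at hcon
  have : Countable (Submodule.span ℤ (Set.range (Pi.basisFun ℝ (Fin N)))).toAddSubgroup :=
    inferInstanceAs (Countable (Submodule.span ℤ (Set.range (Pi.basisFun ℝ (Fin N)))))
  obtain ⟨x, y, hxy, hd⟩ := exists_pair_mem_lattice_not_disjoint_vadd fd mBA.nullMeasurableSet hcon
  obtain ⟨_, ⟨_, ⟨u, hu, rfl⟩, rfl⟩, _, ⟨v, hv, rfl⟩, huv⟩ := Set.not_disjoint_iff.mp hd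
  have huv : (y : Fin N → ℝ) + Bm b v = x + Bm b u := huv
  have e1 : Bm b (u - v) = ((y - x : _) : Fin N → ℝ) := by
    rw [map_sub, AddSubgroup.coe_sub, sub_eq_sub_iff_add_eq_add, add_comm, ← huv]
  have hz : ∃ z : Fin N → ℤ, ((y - x : _) : Fin N → ℝ) = zc z := by
    have := (y - x).2
    have := (Pi.basisFun ℝ (Fin N)).mem_span_iff_repr_mem ℤ ((y - x : _) : Fin N → ℝ) |>.1 this
    choose z hz using this
    exact ⟨z, funext fun i => by simpa [zc] using (hz i).symm⟩
  obtain ⟨z, hz⟩ := hz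
  have := hA u hu v hv z (e1.trans hz)
  rw [this, map_zero] at e1
  exact hxy (Subtype.ext (sub_eq_zero.1 e1.symm).symm)

lemma mink {N : ℕ} (p : Seminorm ℝ (Fin N → ℝ)) (hp : ∀ x, p x = 0 → x = 0) :
    ∃ b : Fin N → (Fin N → ℤ), LinearIndependent ℝ (fun i => zc (b i)) ∧
      (∏ i, ENNReal.ofReal (p (zc (b i)))) * I p ≤ 2 ^ N * N.factorial := by
  obtain ⟨b, hli, hmin⟩ := exseq p hp N le_rfl
  refine ⟨fun i => b i, hli, ?_⟩
  have hns : ∀ i j, i ≤ j → j < N → zc (b j) ∉ Submodule.span ℝ ((fun i => zc (b i)) '' Set.Iio i) := by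
    intro i j hij hj hmem
    refine hli.notMem_span_image (x := ⟨j, hj⟩) (s := {m : Fin N | m.val < i}) (by simpa using hij) ?_
    convert hmem using 2
    ext x
    constructor
    · rintro ⟨m, hm, rfl⟩; exact ⟨m, hm, rfl⟩
    · rintro ⟨m, hm, rfl⟩
      have : m < i := hm
      exact ⟨⟨m, by omega⟩, hm, rfl⟩
  set l : ℕ → ℝ := fun i => if N = 0 then 1 else p (zc (b (min i (N - 1)))) with hl
  have hlv : ∀ i, i < N → l i = p (zc (b i)) := by
    intro i hi
    simp only [hl]
    rw [if_neg (by omega), min_eq_left (by omega)]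
  have hl0 : ∀ i, 0 < l i := by
    intro i
    simp only [hl]
    split_ifs with h
    · exact one_pos
    · refine (apply_nonneg p _).lt_of_ne fun h0 => ?_
      have := hp _ h0.symm
      refine hns 0 (min i (N - 1)) (Nat.zero_le _) (by omega) ?_
      rw [this]; exact zero_mem _
  have hlm : Monotone l := by
    intro i j hij
    simp only [hl]
    split_ifs with h
    · exact le_rfl
    · exact hmin _ (by omega) _ (hns _ _ (by omega) (by omega))
  set bR : Fin N → Fin N → ℝ := fun i => zc (b i) with hbR
  set q := p.comp (Bm bR) with hq
  have hqd : ∀ x, q x = 0 → x = 0 := fun x hx => Bm_inj hli (hp _ hx)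
  obtain ⟨A, mA, -, vA, dA⟩ := iter q l hl0 hlm N 0 (by omega)
  have key := blich hli mA (by
    intro u hu v hv z hz
    by_contra hc
    set c := u - v with hcdef
    have hne : (Finset.univ.filter fun i => c i ≠ 0).Nonempty := by
      obtain ⟨i, hi⟩ := Function.ne_iff.1 hc
      exact ⟨i, by simpa using hi⟩
    obtain ⟨j, hj, hjm⟩ := Finset.exists_max_image _ (fun i : Fin N => i) hne
    have hj : c j ≠ 0 := by simpa using hj
    have hjm : ∀ i, j < i → c i = 0 := by
      intro i hi
      by_contra h
      exact absurd (hjm i (by simpa using h)) (not_le.2 hi)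
    have h1 := dA (j + 1) (Nat.zero_le _) (by omega) u hu v hv (by
      intro i hi
      have := hjm i (Fin.lt_def.2 (by omega))
      exact sub_eq_zero.1 this)
    rw [Nat.add_sub_cancel, hlv _ j.2] at h1
    have h2 : p (zc z) < p (zc (b j)) := by rw [← hz]; exact h1
    have h3 : zc z ∈ Submodule.span ℝ ((fun i => zc (b i)) '' Set.Iio (j : ℕ)) := by
      by_contra h
      exact absurd (hmin j j.2 z h) (not_le.2 h2)
    rw [← hz, Bm_apply, ← Finset.add_sum_erase _ _ (Finset.mem_univ j)] at h3
    have h4 : ∑ i ∈ Finset.univ.erase j, c i • bR i ∈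
        Submodule.span ℝ ((fun i => zc (b i)) '' Set.Iio (j : ℕ)) := by
      refine Submodule.sum_mem _ fun i hi => ?_
      rcases lt_or_ge j i with h | h
      · rw [hjm i h, zero_smul]; exact zero_mem _
      · refine Submodule.smul_mem _ _ (Submodule.subset_span ⟨i, ?_, rfl⟩)
        have := (Finset.mem_erase.1 hi).1
        exact lt_of_le_of_ne h this
    have h5 := (Submodule.add_mem_iff_left _ h4).1 h3
    rw [Submodule.smul_mem_iff _ hj] at h5
    exact hns j j le_rfl j.2 h5)
  have hvol : volume {x | q x < 1} = 2 ^ N * volume {x | q x < 1 / 2} := by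
    have : {x | q x < 1} = (2 : ℝ) • {x | q x < 1 / 2} := by
      ext x
      rw [Set.mem_smul_set_iff_inv_smul_mem₀ two_ne_zero]
      simp only [Set.mem_ofPred_eq, map_smul_eq_mul, norm_inv, Real.norm_eq_abs, abs_two]
      constructor <;> intro h <;> linarith
    rw [this, Measure.addHaar_smul]
    simp
  have hprod : ENNReal.ofReal (l (0 - 1) ^ 0 * ∏ i ∈ Finset.Ico 0 N, l i) =
      ∏ i : Fin N, ENNReal.ofReal (p (zc (b i))) := by
    rw [pow_zero, one_mul, Nat.Ico_zero_eq_range, ENNReal.ofReal_prod_of_nonneg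
      (fun i _ => (hl0 i).le), Finset.prod_range]
    exact Finset.prod_congr rfl fun i _ => by rw [hlv i i.2]
  rw [vA, hprod] at key
  rw [I_comp p (Bm bR) (Bm_det_ne bR hli), I_vol q hqd, hvol]
  calc _ = 2 ^ N * N.factorial * (ENNReal.ofReal |LinearMap.det (Bm bR)| *
        ((∏ i : Fin N, ENNReal.ofReal (p (zc (b i)))) * volume {x | q x < 1 / 2})) := by ring
    _ ≤ 2 ^ N * N.factorial * 1 := by gcongr
    _ = _ := mul_one _

end PLR

namespace PLR
open Pointwise ENNReal

lemma zli {N : ℕ} {b : Fin N → Fin N → ℤ} (h : LinearIndependent ℝ (fun i => zc (b i))) :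
    LinearIndependent ℤ b := by
  rw [Fintype.linearIndependent_iff] at h ⊢
  intro g hg i
  have := h (fun i => (g i : ℝ)) (by
    ext j
    have h2 := congrFun hg j
    simp only [Finset.sum_apply, Pi.smul_apply, smul_eq_mul, Pi.zero_apply, zc] at h2 ⊢
    exact_mod_cast h2) i
  exact_mod_cast this

lemma index_eq {N : ℕ} {b : Fin N → Fin N → ℤ} (h : LinearIndependent ℤ b) :
    (Submodule.span ℤ (Set.range b)).toAddSubgroup.index = ((Matrix.of b).det).natAbs := by
  have h1 := Submodule.natAbs_det_basis_change (Pi.basisFun ℤ (Fin N))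
    (Submodule.span ℤ (Set.range b)) (Module.Basis.span h)
  have h2 : (((↑) : Submodule.span ℤ (Set.range b) → _) ∘ (Module.Basis.span h)) = b := by
    funext i; simp [Module.Basis.span_apply]
  rw [h2, Pi.basisFun_det_apply] at h1
  exact h1.symm

lemma index_le {N : ℕ} (p : Seminorm ℝ (Fin N → ℝ)) (hp : ∀ x, p x = 0 → x = 0)
    {b : Fin N → Fin N → ℤ} (h : LinearIndependent ℝ (fun i => zc (b i)))
    (hb : (∏ i, ENNReal.ofReal (p (zc (b i)))) * I p ≤ 2 ^ N * N.factorial) :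
    ((Matrix.of b).det).natAbs ≤ N.factorial := by
  set bR : Fin N → Fin N → ℝ := fun i => zc (b i) with hbR
  have hl0 : ∀ i, 0 < p (bR i) := fun i => (apply_nonneg p _).lt_of_ne fun h0 =>
    h.ne_zero i (hp _ h0.symm)
  have hI : ∏ i, ENNReal.ofReal (2 / p (bR i)) ≤ I (p.comp (Bm bR)) := by
    rw [← lintegral_exp_sum hl0]
    refine lintegral_mono fun c => ENNReal.ofReal_le_ofReal (Real.exp_le_exp.2 (neg_le_neg ?_))
    change p (Bm bR c) ≤ _
    rw [Bm_apply]
    calc p (∑ i, c i • bR i) ≤ ∑ i, p (c i • bR i) := by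
          exact Finset.le_sum_of_subadditive p (map_zero p).le (map_add_le_add p) _ _
      _ = _ := Finset.sum_congr rfl fun i _ => by
          rw [map_smul_eq_mul, Real.norm_eq_abs, mul_comm]
  rw [I_comp p (Bm bR) (Bm_det_ne bR h), Bm_det] at hb
  have hdet : (Matrix.of bR).det = (((Matrix.of b).det : ℤ) : ℝ) := by
    have := (Int.castRingHom ℝ).map_det (Matrix.of b)
    rw [eq_intCast] at this
    rw [this]; rfl
  rw [hdet] at hb
  have hnat : ENNReal.ofReal |(((Matrix.of b).det : ℤ) : ℝ)| = ((Matrix.of b).det.natAbs : ℝ≥0∞) := by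
    rw [← Int.cast_abs, ← Nat.cast_natAbs, ENNReal.ofReal_natCast]
  rw [hnat] at hb
  have hone : (∏ i, ENNReal.ofReal (p (bR i))) * ∏ i, ENNReal.ofReal (2 / p (bR i)) = 2 ^ N := by
    rw [← Finset.prod_mul_distrib]
    have : ∀ i, ENNReal.ofReal (p (bR i)) * ENNReal.ofReal (2 / p (bR i)) = 2 := by
      intro i
      rw [← ENNReal.ofReal_mul (hl0 i).le, mul_div_cancel₀ _ (hl0 i).ne']
      simp
    simp [this]
  have h3 : (2 ^ N : ℝ≥0∞) * ((Matrix.of b).det.natAbs : ℝ≥0∞) ≤ 2 ^ N * N.factorial := by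
    refine le_trans ?_ hb
    calc (2 ^ N : ℝ≥0∞) * ((Matrix.of b).det.natAbs : ℝ≥0∞)
        = (∏ i, ENNReal.ofReal (p (bR i))) * (((Matrix.of b).det.natAbs : ℝ≥0∞) *
          ∏ i, ENNReal.ofReal (2 / p (bR i))) := by rw [← hone]; ring
      _ ≤ _ := by gcongr
  rw [ENNReal.mul_le_mul_iff_right (by simp) (by simp)] at h3
  exact_mod_cast h3

lemma final {X : Type*} [MeasurableSpace X] (ν : Measure X) [SigmaFinite ν]
    (N : ℕ) (F : Fin N → X → ℝ) (mF : ∀ n, Measurable (F n)) (hF : ∀ n, Integrable (F n) ν)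
    (hind : ∀ ξ : Fin N → ℝ, (∫ x, |∑ n, ξ n * F n x| ∂ν) = 0 → ξ = 0) :
    ∃ b : Fin N → (Fin N → ℤ), LinearIndependent ℤ b ∧
      (∏ n, ∫ x, |∑ i, (b n i : ℝ) * F i x| ∂ν) ≤
        (∫ x : Fin N → X, |Matrix.det (Matrix.of fun l n => F l (x n))|
          ∂(Measure.pi fun _ => ν)) ∧
      (Submodule.span ℤ (Set.range b)).toAddSubgroup.index ≤ N.factorial := by
  have hp : ∀ ξ, snF ν F hF ξ = 0 → ξ = 0 := hind
  obtain ⟨b, hli, hb⟩ := mink (snF ν F hF) hp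
  refine ⟨b, zli hli, ?_, ?_⟩
  · have hr := hb.trans (reisner ν N F mF hF hp)
    rw [mul_comm, ENNReal.mul_le_mul_iff_right (I_ne_zero _) (I_ne_top _ hp),
      ← ENNReal.ofReal_prod_of_nonneg (fun i _ => apply_nonneg _ _)] at hr
    have hintg : Integrable (fun x : Fin N → X => Matrix.det (Matrix.of fun l n => F l (x n)))
        (Measure.pi fun _ => ν) := by
      simp only [Matrix.det_apply, Matrix.of_apply]
      refine integrable_finsetSum _ fun σ _ => ?_
      exact (Integrable.fintype_prod (f := fun i => F (σ i)) fun i => hF (σ i)).smul _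
    have hnn : 0 ≤ ∫ x : Fin N → X, |Matrix.det (Matrix.of fun l n => F l (x n))|
          ∂(Measure.pi fun _ => ν) := integral_nonneg fun x => abs_nonneg _
    rw [← ENNReal.ofReal_le_ofReal_iff hnn, ofReal_integral_eq_lintegral_ofReal hintg.abs
      (Filter.Eventually.of_forall fun x => abs_nonneg _)]
    exact hr
  · rw [index_eq (zli hli)]
    exact index_le _ hp hli hb

end PLR

/-- Theorem 4: there are linearly independent `b₁,…,b_N ∈ ℤ^N` with
`∏ ‖T(b_n)‖₁ ≤ ∫_{X^N} |Δ(F₁,…,F_N;x)| dν^N(x)`, and the `ℤ`-module they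
generate has index at most `N!` in `ℤ^N`. -/
theorem stmt9 {X : Type*} [MeasurableSpace X] (ν : Measure X) [SigmaFinite ν]
    (N : ℕ) (F : Fin N → X → ℝ) (hF : ∀ n, Integrable (F n) ν)
    (hind : ∀ ξ : Fin N → ℝ, (∫ x, |∑ n, ξ n * F n x| ∂ν) = 0 → ξ = 0) :
    ∃ b : Fin N → (Fin N → ℤ), LinearIndependent ℤ b ∧
      (∏ n, ∫ x, |∑ i, (b n i : ℝ) * F i x| ∂ν) ≤
        (∫ x : Fin N → X, |Matrix.det (Matrix.of fun l n => F l (x n))|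
          ∂(Measure.pi fun _ => ν)) ∧
      (Submodule.span ℤ (Set.range b)).toAddSubgroup.index ≤ N.factorial := by
  have ae : ∀ n, F n =ᵐ[ν] (hF n).1.mk (F n) := fun n => (hF n).1.ae_eq_mk
  set G : Fin N → X → ℝ := fun n => (hF n).1.mk (F n) with hG
  have mG : ∀ n, Measurable (G n) := fun n => (hF n).1.stronglyMeasurable_mk.measurable
  have iG : ∀ n, Integrable (G n) ν := fun n => (hF n).congr (ae n)
  have eS : ∀ ξ : Fin N → ℝ, ∫ x, |∑ n, ξ n * F n x| ∂ν = ∫ x, |∑ n, ξ n * G n x| ∂ν := by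
    intro ξ
    refine integral_congr_ae ?_
    filter_upwards [Filter.eventually_all.2 ae] with x hx
    simp only [hx]
    rfl
  have eD : (∫ x : Fin N → X, |Matrix.det (Matrix.of fun l n => F l (x n))|
          ∂(Measure.pi fun _ => ν)) = ∫ x : Fin N → X, |Matrix.det (Matrix.of fun l n => G l (x n))|
          ∂(Measure.pi fun _ => ν) := by
    refine integral_congr_ae ?_
    have : ∀ m : Fin N, ∀ᵐ x : Fin N → X ∂(Measure.pi fun _ => ν), ∀ l, F l (x m) = G l (x m) :=
      fun m => (Measure.tendsto_eval_ae_ae (μ := fun _ : Fin N => ν) (i := m)).eventually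
        (Filter.eventually_all.2 ae)
    filter_upwards [Filter.eventually_all.2 this] with x hx
    simp only [hx]
  obtain ⟨b, h1, h2, h3⟩ := PLR.final ν N G mG iG (fun ξ h => hind ξ ((eS ξ).trans h))
  refine ⟨b, h1, ?_, h3⟩
  rw [eD]
  simp only [eS]
  exact h2
end
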